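/- arXiv:1111.5302 — 4 statements merged into one kernel-verified Lean document; each statement's English description precedes it below -/
import Mathlib

section
/- Let θ ∈ ℝ^N and suppose Σ_{i=1}^N Σ_{j=1}^N cos(θ_i − θ_j) ≠ 0. Then, summing over all spanning trees T of the complete graph on the vertex set {1,...,N}, one has Σ_T Π_{{l,m} edge of T} cos(θ_l − θ_m) = ( 2 Π_{i=1}^N κ_i(θ) − Σ_{k=1}^N Π_{i ≠ k} κ_i(θ) ) / ( Σ_{i,j} cos(θ_i − θ_j) ), where κ_i(θ) = Σ_{j=1}^N cos(θ_j − θ_i). -/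
open Real Matrix Finset

/-- `κ_i(θ) = Σ_j cos (θ_j - θ_i)`. -/
noncomputable def kappa (N : ℕ) (θ : Fin N → ℝ) (i : Fin N) : ℝ :=
  ∑ j, Real.cos (θ j - θ i)

/-- The symmetric edge weight `{l, m} ↦ cos (θ_l - θ_m)`. -/
noncomputable def edgeWeight (N : ℕ) (θ : Fin N → ℝ) : Sym2 (Fin N) → ℝ :=
  Sym2.lift ⟨fun l m => Real.cos (θ l - θ m), fun l m => by
    simp only []; rw [← neg_sub (θ l) (θ m), Real.cos_neg]⟩

/-!
Write `S = X ^ 2 + Y ^ 2` with `X = ∑ cos θ_i` and `Y = ∑ sin θ_i`. The Laplacian of the weights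
`cos (θ_l - θ_m)` is `L = diag κ - x xᵀ - y yᵀ` with `x = cos θ` and `y = sin θ`. By the matrix-tree
theorem every cofactor of `L` equals the tree sum `τ`, so the matrix determinant lemma gives
`det (L + u vᵀ) = (∑ u) (∑ v) τ`. Taking `u = v = x` and `u = v = y` yields
`X ^ 2 τ = det (diag κ - y yᵀ)` and `Y ^ 2 τ = det (diag κ - x xᵀ)`, two rank-one perturbations of a
diagonal matrix; their sum is the identity, because `x_k ^ 2 + y_k ^ 2 = 1`.

The matrix-tree theorem comes from expanding the cofactor at `r` multilinearly in the rows
`L_i = ∑ j, w i j (e_i - e_j)`: a choice `i ↦ j = f i` contributes `1` if iterating `f` leads from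
every vertex to `r`, and `0` otherwise.
-/

section Determinant

variable {n R : Type*} [Fintype n] [DecidableEq n] [CommRing R]

theorem det_add_vecMulVec (A : Matrix n n R) (u v : n → R) :
    (A + vecMulVec u v).det = A.det + v ⬝ᵥ A.adjugate *ᵥ u := by
  have rows_added_one_at_a_time (s : Finset n) :
      (A + vecMulVec (s.piecewise u 0) v).det = A.det + ∑ i ∈ s, u i * (A.updateRow i v).det := by
    induction s using Finset.induction_on with
    | empty => simp
    | insert k s hk ih =>
      set B := A + vecMulVec (s.piecewise u 0) v with hB
      have insert_eq : A + vecMulVec ((insert k s).piecewise u 0) v =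
          B.updateRow k (B k + u k • v) := by
        ext i j
        obtain rfl | hik := eq_or_ne i k <;> simp [vecMulVec_apply, *]
      have det_row_eq : (B.updateRow k v).det = (A.updateRow k v).det := by
        refine det_eq_of_forall_row_eq_smul_add_const (s.piecewise u 0) k (by simp [hk])
          fun i j ↦ ?_
        obtain rfl | hik := eq_or_ne i k <;> simp [vecMulVec_apply, *]
      rw [insert_eq, det_updateRow_add, det_updateRow_smul, updateRow_eq_self, det_row_eq, ih,
        sum_insert hk]
      ring
  have := rows_added_one_at_a_time univ
  rw [piecewise_univ] at this
  rw [this, dotProduct_mulVec, ← mulVec_transpose, adjugate_transpose, ← cramer_eq_adjugate_mulVec,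
    dotProduct_comm]
  simp only [dotProduct, cramer_transpose_apply]

theorem det_diagonal_add_vecMulVec (d u v : n → R) :
    (diagonal d + vecMulVec u v).det = ∏ i, d i + ∑ k, u k * v k * ∏ i ∈ univ.erase k, d i := by
  rw [det_add_vecMulVec, det_diagonal, adjugate_diagonal]
  congr 1
  refine sum_congr rfl fun k _ ↦ ?_
  rw [mulVec_diagonal]
  ring

theorem det_eq_one_of_unitriangular {α : Type*} [LinearOrder α] {M : Matrix n n R} (d : n → α)
    (hdiag : ∀ i, M i i = 1) (hoff : ∀ i j, i ≠ j → d i ≤ d j → M i j = 0) : M.det = 1 := by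
  have hM : BlockTriangular M (OrderDual.toDual ∘ d) := fun i j (hij : d i < d j) ↦
    hoff i j (ne_of_apply_ne d hij.ne) hij.le
  have block_eq_one (a : αᵒᵈ) : M.toSquareBlock (OrderDual.toDual ∘ d) a = 1 := by
    ext ⟨i, hi⟩ ⟨j, hj⟩
    have hd : d i = d j := hi.trans hj.symm
    obtain rfl | hij := eq_or_ne i j
    · simp [toSquareBlock_def, hdiag]
    · simp [toSquareBlock_def, hij, hoff i j hij hd.le]
  rw [hM.det]
  exact prod_eq_one fun a _ ↦ by rw [block_eq_one, det_one]

theorem det_updateRow_eq_sum_mul_of_mulVec_one_eq_zero {A : Matrix n n R} (hA : A *ᵥ 1 = 0)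
    (r : n) (v : n → R) :
    (A.updateRow r v).det = (∑ j, v j) * (A.updateRow r (Pi.single r 1)).det := by
  set v₀ := v - (∑ j, v j) • Pi.single r 1 with hv₀
  have hsum : v₀ ⬝ᵥ 1 = 0 := by simp [hv₀, dotProduct_one, ← mul_sum]
  have hker : A.updateRow r v₀ *ᵥ 1 = 0 := by
    ext i
    obtain rfl | hi := eq_or_ne i r
    · simpa [mulVec] using hsum
    · simpa [mulVec, hi] using congrFun hA i
  have hdet : (A.updateRow r v₀).det = 0 :=
    det_eq_zero_of_mulVec_eq_zero_of_mem_nonZeroDivisors hker (i := r) (one_mem _)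
  rw [← sub_add_cancel v ((∑ j, v j) • Pi.single r 1), ← hv₀, det_updateRow_add, hdet,
    det_updateRow_smul, zero_add, hv₀]
  simp

end Determinant

section ParentFunction

variable {V : Type*} {r : V} {f g : V → V}

/-- `f` is the parent function of a tree on `V` rooted at `r`: the root is its own parent, and the
ancestors of every vertex include the root. -/
def IsParentFunction (r : V) (f : V → V) : Prop :=
  f r = r ∧ ∀ i, ∃ k, f^[k] i = r

/-- The graph joining every vertex to its parent. A fixed point of `f` contributes no edge. -/
def parentGraph (f : V → V) : SimpleGraph V :=
  SimpleGraph.fromRel fun i j ↦ f i = j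

theorem parentGraph_adj {i j : V} : (parentGraph f).Adj i j ↔ i ≠ j ∧ (f i = j ∨ f j = i) :=
  Iff.rfl

namespace IsParentFunction

theorem induction (hf : IsParentFunction r f) {p : V → Prop} (root : p r)
    (step : ∀ i, i ≠ r → p (f i) → p i) (i : V) : p i := by
  obtain ⟨k, hk⟩ := hf.2 i
  induction k generalizing i with
  | zero => exact (show i = r from hk) ▸ root
  | succ k ih =>
    obtain rfl | hi := eq_or_ne i r
    · exact root
    · exact step i hi (ih (f i) hk)

theorem of_apply_lt (hr : f r = r) (d : V → ℕ) (hd : ∀ i, i ≠ r → d (f i) < d i) :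
    IsParentFunction r f := by
  refine ⟨hr, fun i ↦ ?_⟩
  induction i using (measure d).wf.induction with | _ i ih
  obtain rfl | hi := eq_or_ne i r
  · exact ⟨0, rfl⟩
  · obtain ⟨k, hk⟩ := ih (f i) (hd i hi)
    exact ⟨k + 1, hk⟩

theorem exists_apply_lt (hf : IsParentFunction r f) :
    ∃ d : V → ℕ, ∀ i, i ≠ r → d (f i) < d i := by
  classical
  have reaches : ∀ i, ∃ k, f^[k] i = r := hf.2
  exact ⟨fun i ↦ Nat.find (reaches i),
    fun i hi ↦ (Nat.find_comp_succ (reaches i) (reaches (f i)) hi).ge⟩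

theorem apply_apply_ne (hf : IsParentFunction r f) {i : V} (hi : i ≠ r) : f (f i) ≠ i := by
  refine hf.induction (p := fun i ↦ i ≠ r → f (f i) ≠ i) (absurd rfl) (fun i hi ih _ hcycle ↦ ?_)
    i hi
  have hfi : f i ≠ r := fun h ↦ hi (by rw [← hcycle, h, hf.1])
  exact ih hfi (congrArg f hcycle)

theorem apply_ne (hf : IsParentFunction r f) {i : V} (hi : i ≠ r) : f i ≠ i :=
  fun h ↦ hf.apply_apply_ne hi (by rw [h, h])

theorem parentGraph_adj_apply (hf : IsParentFunction r f) {i : V} (hi : i ≠ r) :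
    (parentGraph f).Adj i (f i) :=
  ⟨(hf.apply_ne hi).symm, .inl rfl⟩

theorem bijOn_parentGraph_edgeSet (hf : IsParentFunction r f) :
    Set.BijOn (fun i ↦ s(i, f i)) {r}ᶜ (parentGraph f).edgeSet := by
  refine ⟨fun i hi ↦ hf.parentGraph_adj_apply hi, fun i hi j _ h ↦ ?_, fun e he ↦ ?_⟩
  · obtain ⟨hij, -⟩ | ⟨hij, hji⟩ := Sym2.eq_iff.1 h
    · exact hij
    · exact absurd (by rw [hji, ← hij]) (hf.apply_apply_ne hi)
  · induction e with | _ a b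
    obtain ⟨hne, rfl | rfl⟩ := parentGraph_adj.1 (SimpleGraph.mem_edgeSet _ |>.1 he)
    · exact ⟨a, by rintro rfl; exact hne hf.1.symm, rfl⟩
    · exact ⟨b, by rintro rfl; exact hne hf.1, Sym2.eq_swap⟩

theorem parentGraph_connected (hf : IsParentFunction r f) : (parentGraph f).Connected := by
  rw [SimpleGraph.connected_iff_exists_forall_reachable]
  refine ⟨r, hf.induction .rfl fun i hi hreach ↦ ?_⟩
  exact hreach.trans (hf.parentGraph_adj_apply hi).symm.reachable

theorem parentGraph_isTree [Finite V] (hf : IsParentFunction r f) : (parentGraph f).IsTree := by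
  rw [SimpleGraph.isTree_iff_connected_and_card]
  refine ⟨hf.parentGraph_connected, ?_⟩
  rw [Nat.card_coe_set_eq, ← hf.bijOn_parentGraph_edgeSet.ncard_eq, ← Set.ncard_singleton r,
    add_comm, Set.ncard_add_ncard_compl]

theorem eq_of_parentGraph_eq (hf : IsParentFunction r f) (hg : IsParentFunction r g)
    (h : parentGraph f = parentGraph g) : f = g := by
  refine funext (hg.induction (hf.1.trans hg.1.symm) fun i hi ih ↦ ?_)
  have hadj : (parentGraph f).Adj i (g i) := h ▸ hg.parentGraph_adj_apply hi
  obtain hfi | hfgi := (parentGraph_adj.1 hadj).2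
  · exact hfi
  · exact absurd (ih.symm.trans hfgi) (hg.apply_apply_ne hi)

end IsParentFunction

theorem exists_adj_dist_lt {G : SimpleGraph V} {u v : V} (h : G.Reachable u v) (huv : u ≠ v) :
    ∃ w, G.Adj u w ∧ G.dist w v < G.dist u v := by
  obtain ⟨p, hp⟩ := h.exists_walk_length_eq_dist
  cases p with
  | nil => exact absurd rfl huv
  | @cons _ w _ hadj q =>
    refine ⟨w, hadj, ?_⟩
    rw [← hp, SimpleGraph.Walk.length_cons, Nat.lt_succ_iff]
    exact SimpleGraph.dist_le q

theorem exists_isParentFunction_parentGraph_le {G : SimpleGraph V} (hG : G.Connected) (r : V) :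
    ∃ f, IsParentFunction r f ∧ parentGraph f ≤ G := by
  classical
  choose! next hadj hlt using fun i (hi : i ≠ r) ↦ exists_adj_dist_lt (hG.preconnected i r) hi
  set f := Function.update next r r with hf
  have hfr : f r = r := Function.update_self ..
  have hfi (i : V) (hi : i ≠ r) : f i = next i := Function.update_of_ne hi ..
  have adj_apply (i : V) (hi : i ≠ f i) : G.Adj i (f i) := by
    have hir : i ≠ r := by rintro rfl; exact hi hfr.symm
    exact hfi i hir ▸ hadj i hir
  refine ⟨f, .of_apply_lt hfr (G.dist · r) fun i hi ↦ hfi i hi ▸ hlt i hi, fun i j h ↦ ?_⟩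
  obtain ⟨hne, rfl | rfl⟩ := parentGraph_adj.1 h
  · exact adj_apply i hne
  · exact (adj_apply j hne.symm).symm

theorem bijOn_parentGraph [Finite V] (r : V) :
    Set.BijOn parentGraph {f | IsParentFunction r f} {T | T.IsTree} := by
  refine ⟨fun f hf ↦ hf.parentGraph_isTree, fun f hf g hg ↦ hf.eq_of_parentGraph_eq hg,
    fun T hT ↦ ?_⟩
  obtain ⟨f, hf, hle⟩ := exists_isParentFunction_parentGraph_le hT.connected r
  have hminimal := SimpleGraph.isTree_iff_minimal_connected.1 hT
  exact ⟨f, hf, hle.antisymm (hminimal.2 hf.parentGraph_connected hle)⟩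

end ParentFunction

section MatrixTree

variable {V R : Type*} [Fintype V] [DecidableEq V] [CommRing R]

/-- The matrix with rows `e_i - e_{f i}` for `i ≠ r`, and row `e_r` at the root: the vertex-edge
incidence matrix of the functional graph of `f`, grounded at `r`. -/
def parentMatrix (R : Type*) [CommRing R] (r : V) (f : V → V) : Matrix V V R :=
  of fun i ↦ if i = r then Pi.single r 1 else Pi.single i 1 - Pi.single (f i) 1

theorem IsParentFunction.det_parentMatrix {r : V} {f : V → V} (hf : IsParentFunction r f) :
    (parentMatrix R r f).det = 1 := by
  obtain ⟨d, hd⟩ := hf.exists_apply_lt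
  refine det_eq_one_of_unitriangular d (fun i ↦ ?_) (fun i j hij hle ↦ ?_)
  · obtain rfl | hi := eq_or_ne i r
    · simp [parentMatrix]
    · simp [parentMatrix, hi, (hf.apply_ne hi).symm]
  · obtain rfl | hi := eq_or_ne i r
    · simp [parentMatrix, hij.symm]
    · have hj : j ≠ f i := by rintro rfl; exact (hd i hi).not_ge hle
      simp [parentMatrix, hi, hij.symm, hj]

theorem det_parentMatrix_eq_zero {r : V} {f : V → V} (hr : f r = r)
    (hf : ¬ IsParentFunction r f) : (parentMatrix R r f).det = 0 := by
  classical
  obtain ⟨a, ha⟩ : ∃ a, ∀ k, f^[k] a ≠ r := by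
    by_contra! h
    exact hf ⟨hr, h⟩
  -- The vertices from which `f` never reaches `r` are closed under `f` and its preimages.
  let v : V → R := fun i ↦ if ∃ k, f^[k] i = r then 0 else 1
  have hvr : v r = 0 := if_pos ⟨0, rfl⟩
  have hvf (i : V) (hi : i ≠ r) : v (f i) = v i := by
    have : (∃ k, f^[k] (f i) = r) ↔ ∃ k, f^[k] i = r := by
      refine ⟨fun ⟨k, hk⟩ ↦ ⟨k + 1, hk⟩, ?_⟩
      rintro ⟨_ | k, hk⟩
      · exact absurd hk hi
      · exact ⟨k, hk⟩
    simp only [v, this]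
  have hker : parentMatrix R r f *ᵥ v = 0 := by
    ext i
    obtain rfl | hi := eq_or_ne i r
    · simp [parentMatrix, mulVec, hvr]
    · have row_eq : (parentMatrix R r f).row i = Pi.single i 1 - Pi.single (f i) 1 := if_neg hi
      simp [mulVec_apply, row_eq, sub_dotProduct, hvf i hi]
  have hva : v a = 1 := if_neg (not_exists.2 ha)
  exact det_eq_zero_of_mulVec_eq_zero_of_mem_nonZeroDivisors hker (hva ▸ one_mem _)

/-- The Laplacian matrix of the complete digraph with arc weights `w`. The loop weights `w i i`
cancel. -/
def weightedLaplacian (w : V → V → R) : Matrix V V R :=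
  diagonal (fun i ↦ ∑ j, w i j) - of w

theorem weightedLaplacian_row (w : V → V → R) (i : V) :
    weightedLaplacian w i = ∑ j, w i j • (Pi.single i 1 - Pi.single j 1 : V → R) := by
  ext k
  simp [weightedLaplacian, mul_sub, sum_sub_distrib, diagonal_apply, Pi.single_apply, eq_comm]

theorem weightedLaplacian_mulVec_one (w : V → V → R) : weightedLaplacian w *ᵥ 1 = 0 := by
  ext i
  rw [weightedLaplacian, sub_mulVec, Pi.sub_apply, mulVec_diagonal]
  simp [mulVec, dotProduct]

theorem det_weightedLaplacian [Nonempty V] (w : V → V → R) : (weightedLaplacian w).det = 0 :=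
  det_eq_zero_of_mulVec_eq_zero_of_mem_nonZeroDivisors (weightedLaplacian_mulVec_one w)
    (i := Classical.arbitrary V) (one_mem _)

theorem adjugate_weightedLaplacian_eq_diag (w : V → V → R) (i r : V) :
    (weightedLaplacian w).adjugate i r = (weightedLaplacian w).adjugate r r := by
  rw [adjugate_apply, adjugate_apply,
    det_updateRow_eq_sum_mul_of_mulVec_one_eq_zero (weightedLaplacian_mulVec_one w)]
  simp

theorem adjugate_weightedLaplacian_eq_sum_det_parentMatrix (w : V → V → R) (r : V) :
    (weightedLaplacian w).adjugate r r =
      ∑ f : V → V with f r = r, (∏ i ∈ univ.erase r, w i (f i)) * (parentMatrix R r f).det := by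
  let c : V → V → R := Function.update w r (Pi.single r 1)
  let row : V → V → V → R := fun i j ↦
    if i = r then Pi.single r 1 else Pi.single i 1 - Pi.single j 1
  have rows_eq : (weightedLaplacian w).updateRow r (Pi.single r 1) =
      of fun i ↦ ∑ j, c i j • row i j := by
    ext i k
    obtain rfl | hi := eq_or_ne i r
    · simp [c, row, ← sum_smul]
    · simp [c, row, hi, weightedLaplacian_row]
  have prod_eq (f : V → V) :
      ∏ i, c i (f i) = if f r = r then ∏ i ∈ univ.erase r, w i (f i) else 0 := by
    have hc : ∀ i ∈ univ.erase r, c i (f i) = w i (f i) := fun i hi ↦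
      congrFun (Function.update_of_ne (ne_of_mem_erase hi) ..) _
    rw [← mul_prod_erase univ _ (mem_univ r), prod_congr rfl hc]
    simp [c, Pi.single_apply]
  let D := (detRowAlternating (R := R) (n := V)).toMultilinearMap
  calc (weightedLaplacian w).adjugate r r
      = D fun i ↦ ∑ j, c i j • row i j := by rw [adjugate_apply, rows_eq]; rfl
    _ = ∑ f : V → V, (∏ i, c i (f i)) * (parentMatrix R r f).det := by
        rw [D.map_sum]
        exact sum_congr rfl fun f _ ↦ D.map_smul_univ (fun i ↦ c i (f i)) (fun i ↦ row i (f i))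
    _ = _ := by simp only [prod_eq, ite_mul, zero_mul, sum_filter]

open scoped Classical in
theorem adjugate_weightedLaplacian_eq_sum_isParentFunction (w : V → V → R) (i r : V) :
    (weightedLaplacian w).adjugate i r =
      ∑ f : V → V with IsParentFunction r f, ∏ i ∈ univ.erase r, w i (f i) := by
  rw [adjugate_weightedLaplacian_eq_diag, adjugate_weightedLaplacian_eq_sum_det_parentMatrix]
  symm
  refine sum_subset_zero_on_sdiff (monotone_filter_right _ fun f _ hf ↦ hf.1) ?_ ?_
  · intro f hf
    obtain ⟨hr, hf⟩ : f r = r ∧ ¬ IsParentFunction r f := by simpa using hf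
    rw [det_parentMatrix_eq_zero hr hf, mul_zero]
  · intro f hf
    rw [(mem_filter.1 hf).2.det_parentMatrix, mul_one]

open scoped Classical in
theorem adjugate_weightedLaplacian_eq_sum_isTree (w : Sym2 V → R) (i r : V) :
    (weightedLaplacian fun i j ↦ w s(i, j)).adjugate i r =
      ∑ T : SimpleGraph V with T.IsTree, ∏ e ∈ T.edgeFinset, w e := by
  have hbij := bijOn_parentGraph r
  rw [adjugate_weightedLaplacian_eq_sum_isParentFunction]
  refine sum_nbij parentGraph ?_ ?_ ?_ fun f hf ↦ ?_
  · simpa [Set.MapsTo] using hbij.mapsTo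
  · simpa using hbij.injOn
  · simpa using hbij.surjOn
  have hedge := (mem_filter.1 hf).2.bijOn_parentGraph_edgeSet
  refine prod_nbij (fun i ↦ s(i, f i)) ?_ ?_ ?_ fun _ _ ↦ rfl
  · simpa [Set.MapsTo] using hedge.mapsTo
  · simpa [← Set.compl_eq_univ_sdiff] using hedge.injOn
  · simpa [← Set.compl_eq_univ_sdiff] using hedge.surjOn

open scoped Classical in
theorem det_weightedLaplacian_add_vecMulVec [Nonempty V] (w : Sym2 V → R) (u v : V → R) :
    (weightedLaplacian (fun i j ↦ w s(i, j)) + vecMulVec u v).det =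
      (∑ i, u i) * (∑ i, v i) * ∑ T : SimpleGraph V with T.IsTree, ∏ e ∈ T.edgeFinset, w e := by
  rw [det_add_vecMulVec, det_weightedLaplacian, zero_add]
  simp only [dotProduct, mulVec, adjugate_weightedLaplacian_eq_sum_isTree, ← mul_sum, ← sum_mul]
  ring

end MatrixTree

section GramWeights

variable {V R : Type*} [Fintype V] [DecidableEq V] [Nonempty V] [CommRing R]

open scoped Classical in
theorem sq_sum_mul_sum_isTree {w : Sym2 V → R} {x y : V → R}
    (hw : ∀ i j, w s(i, j) = x i * x j + y i * y j) :
    (∑ i, x i) ^ 2 * ∑ T : SimpleGraph V with T.IsTree, ∏ e ∈ T.edgeFinset, w e =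
      ∏ i, ∑ j, w s(i, j) - ∑ k, y k ^ 2 * ∏ i ∈ univ.erase k, ∑ j, w s(i, j) := by
  have hL : weightedLaplacian (fun i j ↦ w s(i, j)) + vecMulVec x x =
      diagonal (fun i ↦ ∑ j, w s(i, j)) + vecMulVec (-y) y := by
    ext i j
    simp only [weightedLaplacian, Matrix.add_apply, Matrix.sub_apply, of_apply, vecMulVec_apply, hw,
      Pi.neg_apply]
    ring
  rw [sq, ← det_weightedLaplacian_add_vecMulVec, hL, det_diagonal_add_vecMulVec]
  simp [sq, sub_eq_add_neg]

open scoped Classical in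
theorem stmt2_general {w : Sym2 V → R} {x y : V → R}
    (hw : ∀ i j, w s(i, j) = x i * x j + y i * y j) :
    (∑ T : SimpleGraph V with T.IsTree, ∏ e ∈ T.edgeFinset, w e) * ∑ i, ∑ j, w s(i, j) =
      2 * ∏ i, ∑ j, w s(i, j) - ∑ k, w s(k, k) * ∏ i ∈ univ \ {k}, ∑ j, w s(i, j) := by
  have hsum : ∑ i, ∑ j, w s(i, j) = (∑ i, x i) ^ 2 + (∑ i, y i) ^ 2 := by
    simp only [hw, sum_add_distrib, ← mul_sum, ← sum_mul, sq]
  have hx := sq_sum_mul_sum_isTree hw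
  have hy := sq_sum_mul_sum_isTree (x := y) (y := x) fun i j ↦ (hw i j).trans (add_comm _ _)
  have hdiag (k : V) : w s(k, k) = x k ^ 2 + y k ^ 2 := by rw [hw, sq, sq]
  simp only [hsum, hdiag, sdiff_singleton_eq_erase, add_mul, sum_add_distrib]
  linear_combination hx + hy

end GramWeights

theorem edgeWeight_mk (N : ℕ) (θ : Fin N → ℝ) (i j : Fin N) :
    edgeWeight N θ s(i, j) = cos (θ i - θ j) :=
  rfl

theorem kappa_eq_sum_edgeWeight (N : ℕ) (θ : Fin N → ℝ) (i : Fin N) :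
    kappa N θ i = ∑ j, edgeWeight N θ s(i, j) :=
  sum_congr rfl fun _ _ ↦ by rw [Sym2.eq_swap, edgeWeight_mk]

open scoped Classical in
/-- Kirchhoff-type identity: the sum over all spanning trees `T` of the complete graph on
`{1, …, N}` of the product of `cos (θ_l - θ_m)` over the edges `{l, m}` of `T`. -/
theorem stmt2 (N : ℕ) (hN : 2 ≤ N) (θ : Fin N → ℝ)
    (hne : ∑ i, ∑ j, Real.cos (θ i - θ j) ≠ 0) :
    ∑ T ∈ Finset.univ.filter (fun T : SimpleGraph (Fin N) => T.IsTree),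
        ∏ e ∈ T.edgeFinset, edgeWeight N θ e
      = (2 * ∏ i, kappa N θ i - ∑ k, ∏ i ∈ Finset.univ \ {k}, kappa N θ i)
          / (∑ i, ∑ j, Real.cos (θ i - θ j)) := by
  have : NeZero N := ⟨by lia⟩
  simpa [kappa_eq_sum_edgeWeight, edgeWeight_mk, eq_div_iff hne] using
    stmt2_general fun i j ↦ (edgeWeight_mk N θ i j).trans (cos_sub _ _)
end

section
/- Let V = {0, π/2}^N minus the two constant vectors. Then min_{θ ∈ V} ‖f(θ)‖² = N(N−1), and max_{θ ∈ V} ‖f(θ)‖² = N³/4 if N is even and N(N²−1)/4 if N is odd. Moreover the minimum is attained exactly at the vertices whose image is a permutation of ±(1,1,...,1,−(N−1)), and the maximum exactly at the vertices with ⌊N/2⌋ coordinates of one value and ⌈N/2⌉ of the other. -/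
open Real Finset

/-- The Kuramoto interaction vector field `f_i(θ) = Σ_j sin (θ_j - θ_i)`. -/
noncomputable def kuraF (N : ℕ) (θ : Fin N → ℝ) : Fin N → ℝ :=
  fun i => ∑ j, Real.sin (θ j - θ i)

/-- The vertex set `V`: the non-constant vertices of the cube `{0, π/2}^N`. -/
def vertexSet (N : ℕ) : Set (Fin N → ℝ) :=
  {θ | (∀ i, θ i = 0 ∨ θ i = Real.pi / 2) ∧ (∃ i, θ i = 0) ∧ ∃ j, θ j = Real.pi / 2}

open scoped Classical in
/-- The number of coordinates of `θ` equal to `0`. -/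
noncomputable def numZeros (N : ℕ) (θ : Fin N → ℝ) : ℕ :=
  (Finset.univ.filter fun k => θ k = 0).card

/-! Let `k` be the number of zero coordinates of a vertex `θ`. Then
`f_i(θ) = (N - k) cos θ_i - k sin θ_i` is `N - k` at the zero coordinates and `-k` at the others,
so `‖f(θ)‖² = k (N - k)² + (N - k) k² = N k (N - k)`, where `k` ranges over `0 < k < N`.
Both extremal problems are then read off the factorization
`a (N - a) - k (N - k) = (k - a) (k - (N - a))`, with `a = 1` for the minimum and `a = ⌊N / 2⌋` for
the maximum: no integer lies strictly between `⌊N / 2⌋` and `N - ⌊N / 2⌋ = ⌈N / 2⌉`.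
-/

section ProductWithFixedSum

lemma mul_sub_sub_mul_sub {R : Type*} [CommRing R] (a k n : R) :
    a * (n - a) - k * (n - k) = (k - a) * (k - (n - a)) := by
  ring

lemma mul_sub_eq_mul_sub_iff {R : Type*} [CommRing R] [NoZeroDivisors R] {a k n : R} :
    k * (n - k) = a * (n - a) ↔ k = a ∨ k = n - a := by
  rw [eq_comm, ← sub_eq_zero, mul_sub_sub_mul_sub, mul_eq_zero, sub_eq_zero, sub_eq_zero]

lemma mul_sub_le_mul_sub {R : Type*} [CommRing R] [PartialOrder R] [IsOrderedRing R] {a k n : R}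
    (hak : a ≤ k) (hkn : k ≤ n - a) : a * (n - a) ≤ k * (n - k) := by
  rw [← sub_nonpos, mul_sub_sub_mul_sub]
  exact mul_nonpos_of_nonneg_of_nonpos (sub_nonneg.mpr hak) (sub_nonpos.mpr hkn)

lemma mul_sub_le_half_mul_sub_half (k n : ℤ) : k * (n - k) ≤ n / 2 * (n - n / 2) := by
  rw [← sub_nonneg, mul_sub_sub_mul_sub]
  rcases le_or_gt k (n / 2) with hk | hk
  · exact mul_nonneg_of_nonpos_of_nonpos (by lia) (by lia)
  · exact mul_nonneg (by lia) (by lia)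

lemma natCast_mul_half_mul_sub_half (n : ℕ) :
    (n : ℝ) * ((n / 2 : ℕ) * (n - (n / 2 : ℕ))) =
      if Even n then (n : ℝ) ^ 3 / 4 else (n : ℝ) * ((n : ℝ) ^ 2 - 1) / 4 := by
  split_ifs with h
  · rw [Nat.cast_div_charZero h.two_dvd]
    ring
  · obtain ⟨m, rfl⟩ := Nat.not_even_iff_odd.mp h
    rw [show (2 * m + 1) / 2 = m by lia]
    push_cast
    ring

end ProductWithFixedSum

section NumZeros

variable {N : ℕ} {θ : Fin N → ℝ}

lemma numZeros_pos_iff : 0 < numZeros N θ ↔ ∃ i, θ i = 0 := by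
  simp [numZeros, card_pos, filter_nonempty_iff]

lemma numZeros_le : numZeros N θ ≤ N :=
  (card_filter_le _ _).trans_eq (card_fin N)

lemma numZeros_lt_iff : numZeros N θ < N ↔ ∃ i, θ i ≠ 0 := by
  have h := card_lt_iff_ne_univ (α := Fin N) {i | θ i = 0}
  simpa [numZeros, filter_eq_self] using h

lemma numZeros_ite_val_lt {k : ℕ} (hk : k ≤ N) {c : ℝ} (hc : c ≠ 0) :
    numZeros N (fun i => if (i : ℕ) < k then 0 else c) = k := by
  simp [numZeros, hc, Fin.card_filter_val_lt, hk]

lemma image_numZeros_vertexSet (N : ℕ) : numZeros N '' vertexSet N = Set.Ioo 0 N := by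
  have hpi : π / 2 ≠ 0 := pi_div_two_pos.ne'
  ext k
  constructor
  · rintro ⟨θ, ⟨-, hzero, j, hj⟩, rfl⟩
    exact ⟨numZeros_pos_iff.mpr hzero, numZeros_lt_iff.mpr ⟨j, hj ▸ hpi⟩⟩
  · rintro ⟨hk, hkN⟩
    refine ⟨_, ⟨fun i => ?_, ⟨⟨0, hk.trans hkN⟩, if_pos hk⟩, ⟨⟨k, hkN⟩, if_neg k.lt_irrefl⟩⟩,
      numZeros_ite_val_lt hkN.le hpi⟩
    exact ite_eq_or_eq _ _ _

end NumZeros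

/-- The set of all vertices of the cube `{0, π/2}^N`, including the two constant ones that
`vertexSet` leaves out; the formulas for `kuraF` hold on all of it. -/
def cubeVertices (N : ℕ) : Set (Fin N → ℝ) :=
  {θ | ∀ i, θ i = 0 ∨ θ i = π / 2}

lemma vertexSet_subset_cubeVertices (N : ℕ) : vertexSet N ⊆ cubeVertices N :=
  fun _ hθ => hθ.1

section CubeVertices

variable {N : ℕ} {θ : Fin N → ℝ}

open scoped Classical in
lemma sum_comp_of_mem_cubeVertices {M : Type*} [AddCommMonoid M] (hθ : θ ∈ cubeVertices N)
    (g : ℝ → M) :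
    ∑ i, g (θ i) = numZeros N θ • g 0 + (N - numZeros N θ) • g (π / 2) := by
  have hcard : #{i | θ i ≠ 0} = N - numZeros N θ := by
    rw [← compl_filter, card_compl, Fintype.card_fin, numZeros]
  rw [← sum_filter_add_sum_filter_not univ (fun i => θ i = 0), ← hcard, numZeros]
  congr 1
  · refine sum_eq_card_nsmul fun i hi => ?_
    rw [(mem_filter.mp hi).2]
  · refine sum_eq_card_nsmul fun i hi => ?_
    rw [(hθ i).resolve_left (mem_filter.mp hi).2]

lemma kuraF_of_mem_cubeVertices (hθ : θ ∈ cubeVertices N) (i : Fin N) :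
    kuraF N θ i = (N - numZeros N θ) * cos (θ i) - numZeros N θ * sin (θ i) := by
  rw [kuraF, sum_comp_of_mem_cubeVertices hθ fun x => sin (x - θ i), zero_sub, sin_neg,
    sin_pi_div_two_sub, nsmul_eq_mul, nsmul_eq_mul, Nat.cast_sub numZeros_le]
  ring

lemma sum_kuraF_sq (hθ : θ ∈ cubeVertices N) :
    ∑ i, kuraF N θ i ^ 2 = N * (numZeros N θ * (N - numZeros N θ)) := by
  simp only [kuraF_of_mem_cubeVertices hθ]
  rw [sum_comp_of_mem_cubeVertices hθ
      fun x => ((N - numZeros N θ) * cos x - numZeros N θ * sin x) ^ 2,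
    cos_zero, sin_zero, cos_pi_div_two, sin_pi_div_two, nsmul_eq_mul, nsmul_eq_mul,
    Nat.cast_sub numZeros_le]
  ring

lemma sum_kuraF_sq_eq_iff (hN : N ≠ 0) (hθ : θ ∈ cubeVertices N) {a : ℕ} (ha : a ≤ N) :
    ∑ i, kuraF N θ i ^ 2 = N * (a * (N - a)) ↔ numZeros N θ = a ∨ numZeros N θ = N - a := by
  rw [sum_kuraF_sq hθ, mul_right_inj' (Nat.cast_ne_zero.mpr hN), mul_sub_eq_mul_sub_iff,
    ← Nat.cast_sub ha, Nat.cast_inj, Nat.cast_inj]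

lemma sum_kuraF_sq_le (hθ : θ ∈ cubeVertices N) :
    ∑ i, kuraF N θ i ^ 2 ≤ N * ((N / 2 : ℕ) * (N - (N / 2 : ℕ))) := by
  rw [sum_kuraF_sq hθ]
  gcongr N * ?_
  have h : (numZeros N θ : ℤ) * (N - numZeros N θ) ≤ (N / 2 : ℕ) * (N - (N / 2 : ℕ)) :=
    mul_sub_le_half_mul_sub_half (numZeros N θ) N
  simpa only [Int.cast_mul, Int.cast_sub, Int.cast_natCast] using (Int.cast_le (R := ℝ)).mpr h

end CubeVertices

section VertexSet

variable {N : ℕ}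

lemma le_sum_kuraF_sq {θ : Fin N → ℝ} (hθ : θ ∈ vertexSet N) :
    N * ((N : ℝ) - 1) ≤ ∑ i, kuraF N θ i ^ 2 := by
  have ⟨hpos, hlt⟩ : numZeros N θ ∈ Set.Ioo 0 N :=
    image_numZeros_vertexSet N ▸ Set.mem_image_of_mem _ hθ
  have hle : (numZeros N θ : ℝ) ≤ N - 1 := le_sub_iff_add_le.mpr (mod_cast hlt)
  rw [sum_kuraF_sq (vertexSet_subset_cubeVertices N hθ), ← one_mul ((N : ℝ) - 1)]
  gcongr N * ?_
  exact mul_sub_le_mul_sub (mod_cast hpos) hle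

lemma exists_mem_vertexSet_eq_sum_kuraF_sq {a : ℕ} (ha : a ∈ Set.Ioo 0 N) :
    ∃ θ ∈ vertexSet N, (N : ℝ) * (a * (N - a)) = ∑ i, kuraF N θ i ^ 2 := by
  obtain ⟨θ, hθ, rfl⟩ := (image_numZeros_vertexSet N).symm ▸ ha
  exact ⟨θ, hθ, (sum_kuraF_sq (vertexSet_subset_cubeVertices N hθ)).symm⟩

end VertexSet

theorem stmt13 (N : ℕ) (hN : 2 ≤ N) :
    IsLeast {r : ℝ | ∃ θ ∈ vertexSet N, r = ∑ i, kuraF N θ i ^ 2}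
        ((N : ℝ) * ((N : ℝ) - 1)) ∧
    IsGreatest {r : ℝ | ∃ θ ∈ vertexSet N, r = ∑ i, kuraF N θ i ^ 2}
        (if Even N then (N : ℝ) ^ 3 / 4 else (N : ℝ) * ((N : ℝ) ^ 2 - 1) / 4) ∧
    (∀ θ ∈ vertexSet N,
      (∑ i, kuraF N θ i ^ 2 = (N : ℝ) * ((N : ℝ) - 1) ↔
        numZeros N θ = 1 ∨ numZeros N θ = N - 1)) ∧
    (∀ θ ∈ vertexSet N,
      (∑ i, kuraF N θ i ^ 2
          = (if Even N then (N : ℝ) ^ 3 / 4 else (N : ℝ) * ((N : ℝ) ^ 2 - 1) / 4) ↔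
        numZeros N θ = N / 2 ∨ numZeros N θ = (N + 1) / 2)) := by
  have hN0 : N ≠ 0 := by lia
  have hcube := vertexSet_subset_cubeVertices N
  have hceil : (N + 1) / 2 = N - N / 2 := by lia
  have hmin : (N : ℝ) * (N - 1) = N * ((1 : ℕ) * (N - (1 : ℕ))) := by
    rw [Nat.cast_one, one_mul]
  rw [← natCast_mul_half_mul_sub_half, hceil]
  refine ⟨⟨?_, ?_⟩, ⟨?_, ?_⟩, fun θ hθ => ?_, fun θ hθ => ?_⟩
  · exact hmin ▸ exists_mem_vertexSet_eq_sum_kuraF_sq ⟨one_pos, by lia⟩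
  · rintro _ ⟨θ, hθ, rfl⟩
    exact le_sum_kuraF_sq hθ
  · exact exists_mem_vertexSet_eq_sum_kuraF_sq ⟨by lia, by lia⟩
  · rintro _ ⟨θ, hθ, rfl⟩
    exact sum_kuraF_sq_le (hcube hθ)
  · rw [hmin]
    exact sum_kuraF_sq_eq_iff hN0 (hcube hθ) (by lia)
  · exact sum_kuraF_sq_eq_iff hN0 (hcube hθ) (Nat.div_le_self N 2)
end

section
/- For every γ > 0 and every integer N ≥ 2, P_sync(γ, N) ≥ ( erf( γN/(2√2) ) )^{N}, where erf(x) = (2/√π) ∫_0^x e^{−t²} dt. -/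
open Real Matrix Finset MeasureTheory ProbabilityTheory

/-- The Jacobian `J(θ)`: `J_ij = cos (θ_i - θ_j)` off the diagonal and
`J_ii = -Σ_{k ≠ i} cos (θ_k - θ_i)`. -/
noncomputable def Jmat (N : ℕ) (θ : Fin N → ℝ) : Matrix (Fin N) (Fin N) ℝ :=
  Matrix.of fun i j =>
    if i = j then -∑ k ∈ Finset.univ \ {i}, Real.cos (θ k - θ i)
    else Real.cos (θ i - θ j)

/-- The set of frequency samples `ω` for which the (mean-adjusted) Kuramoto system with
coupling `γ` has a stable fully synchronized solution: some `θ` with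
`ω_i - (1/N) Σ_j ω_j + γ f_i(θ) = 0` for all `i` and `J(θ)` negative semidefinite with
one-dimensional kernel. -/
def syncSet (N : ℕ) (γ : ℝ) : Set (Fin N → ℝ) :=
  {ω | ∃ θ : Fin N → ℝ,
    (∀ i, ω i - (∑ j, ω j) / N + γ * kuraF N θ i = 0) ∧
    (-(Jmat N θ)).PosSemidef ∧
    Module.finrank ℝ (LinearMap.ker (Matrix.toLin' (Jmat N θ))) = 1}

/-- `P_sync(γ, N)`: the probability, for `ω` a vector of `N` i.i.d. standard Gaussian
random variables, that the Kuramoto system with coupling `γ` fully synchronizes. -/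
noncomputable def Psync (γ : ℝ) (N : ℕ) : ℝ :=
  ((Measure.pi fun _ : Fin N => gaussianReal 0 1) (syncSet N γ)).toReal

/-- The error function `erf x = (2/√π) ∫_0^x e^{-t²} dt`. -/
noncomputable def erf (x : ℝ) : ℝ :=
  (2 / Real.sqrt Real.pi) * ∫ t in (0 : ℝ)..x, Real.exp (-t ^ 2)

/-!
Frequencies `Ω` with zero sum make `θ ↦ Σ_i Ω_i θ_i + (γ / 2) Σ_{i,j} cos (θ_i - θ_j)` invariant
under rotations, so it attains its maximum on the phases of spread at most `π / 2`. Suppose the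
frequencies differ pairwise by less than `γ N`. Since `sin x + cos x ≥ 1` on `[0, π / 2]`, two
phases at distance exactly `π / 2` are pulled towards each other at relative speed at least `γ N`,
so on the boundary of the constraint set the gradient points strictly inwards. Moving along the
gradient is therefore admissible at the maximizer, which forces the gradient to vanish there, and
then the maximizer cannot lie on the boundary. So all `cos (θ_i - θ_j)` are positive and `J(θ)` is
minus the Laplacian of a complete graph with positive weights. The frequency condition holds when
every `|ω_i|` is below `γ N / 2`, an event of probability `erf (γ N / (2 √2)) ^ N`.
-/

section ZeroRowSums

lemma mul_sub_sq_nonneg_of_ne {ι R : Type*} [CommRing R] [LinearOrder R] [IsStrictOrderedRing R]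
    {M : Matrix ι ι R} (hoff : ∀ i j, i ≠ j → 0 ≤ M i j) (x : ι → R) (i j : ι) :
    0 ≤ M i j * (x i - x j) ^ 2 := by
  rcases eq_or_ne i j with rfl | hij
  · simp
  · exact mul_nonneg (hoff i j hij) (sq_nonneg _)

variable {ι : Type*} [Fintype ι]

lemma two_mul_dotProduct_mulVec_of_sum_eq_zero {R : Type*} [CommRing R] {M : Matrix ι ι R}
    (hM : M.IsSymm) (hrow : ∀ i, ∑ j, M i j = 0) (x : ι → R) :
    2 * (x ⬝ᵥ M *ᵥ x) = -∑ i, ∑ j, M i j * (x i - x j) ^ 2 := by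
  have hcol (j : ι) : ∑ i, M i j = 0 := by simpa only [hM.apply] using hrow j
  have hleft : ∑ i, ∑ j, M i j * x i ^ 2 = 0 := by
    simp only [← Finset.sum_mul, hrow, zero_mul, Finset.sum_const_zero]
  have hright : ∑ i, ∑ j, M i j * x j ^ 2 = 0 := by
    rw [Finset.sum_comm]
    simp only [← Finset.sum_mul, hcol, zero_mul, Finset.sum_const_zero]
  calc 2 * (x ⬝ᵥ M *ᵥ x)
      = 2 * ∑ i, ∑ j, x i * (M i j * x j)
          - ∑ i, ∑ j, M i j * x i ^ 2 - ∑ i, ∑ j, M i j * x j ^ 2 := by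
        simp only [hleft, hright, sub_zero, dotProduct, mulVec, Finset.mul_sum]
    _ = -∑ i, ∑ j, M i j * (x i - x j) ^ 2 := by
        simp only [Finset.mul_sum, ← Finset.sum_sub_distrib, ← Finset.sum_neg_distrib]
        exact Finset.sum_congr rfl fun i _ => Finset.sum_congr rfl fun j _ => by ring

lemma posSemidef_neg_of_sum_eq_zero {M : Matrix ι ι ℝ} (hM : M.IsSymm)
    (hrow : ∀ i, ∑ j, M i j = 0) (hoff : ∀ i j, i ≠ j → 0 ≤ M i j) : (-M).PosSemidef := by
  refine .of_dotProduct_mulVec_nonneg ?_ fun x => ?_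
  · rw [IsHermitian, conjTranspose_eq_transpose_of_trivial, transpose_neg, hM.eq]
  · have hquad := two_mul_dotProduct_mulVec_of_sum_eq_zero hM hrow x
    have hnonneg := Finset.sum_nonneg fun i (_ : i ∈ univ) =>
      Finset.sum_nonneg fun j (_ : j ∈ univ) => mul_sub_sq_nonneg_of_ne hoff x i j
    rw [star_trivial, neg_mulVec, dotProduct_neg]
    linarith

lemma mulVec_eq_zero_iff_forall_eq {R : Type*} [CommRing R] [LinearOrder R] [IsStrictOrderedRing R]
    {M : Matrix ι ι R} (hM : M.IsSymm) (hrow : ∀ i, ∑ j, M i j = 0)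
    (hoff : ∀ i j, i ≠ j → 0 < M i j) {x : ι → R} : M *ᵥ x = 0 ↔ ∀ i j, x i = x j := by
  refine ⟨fun hx => ?_, fun hx => funext fun i => ?_⟩
  · have hterm := mul_sub_sq_nonneg_of_ne (fun i j hij => (hoff i j hij).le) x
    have hquad : ∑ i, ∑ j, M i j * (x i - x j) ^ 2 = 0 := by
      simpa [hx] using (two_mul_dotProduct_mulVec_of_sum_eq_zero hM hrow x).symm
    simp only [Finset.sum_eq_zero_iff_of_nonneg, Finset.sum_nonneg, hterm, implies_true,
      Finset.mem_univ, forall_const] at hquad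
    intro i j
    by_contra hne
    have hij : i ≠ j := fun h => hne (congrArg x h)
    exact (mul_pos (hoff i j hij) (sq_pos_of_ne_zero (sub_ne_zero.2 hne))).ne' (hquad i j)
  · calc ∑ j, M i j * x j = ∑ j, M i j * x i :=
          Finset.sum_congr rfl fun j _ => by rw [hx j i]
      _ = 0 := by rw [← Finset.sum_mul, hrow, zero_mul]

lemma finrank_ker_toLin'_eq_one [DecidableEq ι] [Nonempty ι] {K : Type*} [Field K] [LinearOrder K]
    [IsStrictOrderedRing K] {M : Matrix ι ι K} (hM : M.IsSymm) (hrow : ∀ i, ∑ j, M i j = 0)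
    (hoff : ∀ i j, i ≠ j → 0 < M i j) :
    Module.finrank K (LinearMap.ker (toLin' M)) = 1 := by
  have hker : LinearMap.ker (toLin' M) = K ∙ (1 : ι → K) := by
    ext x
    rw [LinearMap.mem_ker, toLin'_apply, mulVec_eq_zero_iff_forall_eq hM hrow hoff,
      Submodule.mem_span_singleton]
    constructor
    · intro hx
      exact ⟨x (Classical.arbitrary ι), funext fun i => by simp [hx i (Classical.arbitrary ι)]⟩
    · rintro ⟨c, rfl⟩ _ _
      rfl
  rw [hker, finrank_span_singleton one_ne_zero]

end ZeroRowSums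

section Jacobian

variable {N : ℕ}

lemma isSymm_Jmat (θ : Fin N → ℝ) : (Jmat N θ).IsSymm := by
  refine IsSymm.ext fun i j => ?_
  rcases eq_or_ne i j with rfl | hij
  · rfl
  · simp only [Jmat, of_apply, if_neg hij, if_neg hij.symm]
    rw [← Real.cos_neg, neg_sub]

lemma sum_Jmat_eq_zero (θ : Fin N → ℝ) (i : Fin N) : ∑ j, Jmat N θ i j = 0 := by
  have hoff : ∀ j ∈ univ \ {i}, Jmat N θ i j = Real.cos (θ j - θ i) := fun j hj => by
    have hij : i ≠ j := by simpa [eq_comm] using hj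
    rw [Jmat, of_apply, if_neg hij, ← Real.cos_neg, neg_sub]
  rw [← Finset.sum_sdiff (subset_univ {i}), Finset.sum_congr rfl hoff, Finset.sum_singleton, Jmat,
    of_apply, if_pos rfl, add_neg_cancel]

lemma Jmat_pos_of_ne {θ : Fin N → ℝ} (hθ : ∀ i j, θ i - θ j < π / 2) (i j : Fin N) (hij : i ≠ j) :
    0 < Jmat N θ i j := by
  rw [Jmat, of_apply, if_neg hij]
  exact Real.cos_pos_of_mem_Ioo ⟨by linarith [hθ j i], hθ i j⟩

end Jacobian

section PhaseCohesive

/-- The phase cohesive configurations: those whose phases, as real numbers, have spread at most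
`δ`. -/
def phaseCohesiveSet (ι : Type*) (δ : ℝ) : Set (ι → ℝ) :=
  {θ | ∀ i j, θ i - θ j ≤ δ}

variable {ι : Type*} {δ : ℝ}

lemma isClosed_phaseCohesiveSet : IsClosed (phaseCohesiveSet ι δ) := by
  simp only [phaseCohesiveSet, Set.ofPred_forall]
  exact isClosed_iInter fun i => isClosed_iInter fun j => isClosed_le (by fun_prop) (by fun_prop)

lemma exists_isMaxOn_phaseCohesiveSet [Nonempty ι] {α : Type*} [LinearOrder α] [TopologicalSpace α]
    [ClosedIciTopology α] (hδ : 0 ≤ δ) {U : (ι → ℝ) → α} (hU : Continuous U)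
    (hshift : ∀ θ c, U (fun i => θ i - c) = U θ) :
    ∃ θ ∈ phaseCohesiveSet ι δ, IsMaxOn U (phaseCohesiveSet ι δ) θ := by
  obtain ⟨i₀⟩ := ‹Nonempty ι›
  set K : Set (ι → ℝ) := phaseCohesiveSet ι δ ∩ {θ | θ i₀ = 0}
  have hclosed : IsClosed K :=
    isClosed_phaseCohesiveSet.inter (isClosed_eq (by fun_prop) (by fun_prop))
  have hcompact : IsCompact K := by
    refine (isCompact_univ_pi fun _ => isCompact_Icc (a := -δ) (b := δ)).of_isClosed_subset
      hclosed ?_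
    rintro θ ⟨hθ, hθ₀ : θ i₀ = 0⟩ i -
    exact ⟨by linarith [hθ i₀ i], by linarith [hθ i i₀]⟩
  have hzero : (0 : ι → ℝ) ∈ K := ⟨fun _ _ => by simpa using hδ, rfl⟩
  obtain ⟨θ, hθK, hθ⟩ := hcompact.exists_isMaxOn ⟨0, hzero⟩ hU.continuousOn
  refine ⟨θ, hθK.1, fun φ hφ => ?_⟩
  have hφK : (fun i => φ i - φ i₀) ∈ K := ⟨fun i j => by simpa using hφ i j, sub_self _⟩
  have hle : U (fun i => φ i - φ i₀) ≤ U θ := hθ hφK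
  rwa [hshift] at hle

lemma mem_posTangentConeAt_phaseCohesiveSet [Finite ι] {θ v : ι → ℝ}
    (hθ : θ ∈ phaseCohesiveSet ι δ) (hv : ∀ i j, θ i - θ j = δ → v i < v j) :
    v ∈ posTangentConeAt (phaseCohesiveSet ι δ) θ := by
  have := Fintype.ofFinite ι
  refine mem_posTangentConeAt_of_frequently_mem (Filter.Eventually.frequently ?_)
  simp only [phaseCohesiveSet, Set.mem_ofPred_eq, Filter.eventually_all]
  intro i j
  rcases (hθ i j).lt_or_eq with hlt | heq
  · have hcont : Continuous fun t : ℝ => (θ + t • v) i - (θ + t • v) j := by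
      simp only [Pi.add_apply, Pi.smul_apply]
      fun_prop
    have hnear := hcont.continuousAt (x := 0).eventually_lt_const (u := δ) (by simpa using hlt)
    exact (hnear.filter_mono nhdsWithin_le_nhds).mono fun _ => le_of_lt
  · filter_upwards [self_mem_nhdsWithin] with t ht
    have := mul_lt_mul_of_pos_left (hv i j heq) (Set.mem_Ioi.1 ht)
    simp only [Pi.add_apply, Pi.smul_apply, smul_eq_mul]
    linarith

end PhaseCohesive

section Equilibrium

variable {N : ℕ} {γ : ℝ} {Ω θ : Fin N → ℝ}

/-- The right-hand side `Ω_i + γ f_i(θ)` of the Kuramoto system with natural frequencies `Ω`. -/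
noncomputable def kuraField (γ : ℝ) (Ω θ : Fin N → ℝ) : Fin N → ℝ :=
  fun i => Ω i + γ * kuraF N θ i

/-- The potential whose gradient is `kuraField`. -/
noncomputable def kuraPotential (γ : ℝ) (Ω θ : Fin N → ℝ) : ℝ :=
  ∑ i, Ω i * θ i + γ / 2 * ∑ i, ∑ j, Real.cos (θ i - θ j)

lemma continuous_kuraPotential (γ : ℝ) (Ω : Fin N → ℝ) : Continuous (kuraPotential γ Ω) := by
  unfold kuraPotential
  fun_prop

lemma kuraPotential_sub_const (hΩ : ∑ i, Ω i = 0) (γ : ℝ) (θ : Fin N → ℝ) (c : ℝ) :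
    kuraPotential γ Ω (fun i => θ i - c) = kuraPotential γ Ω θ := by
  simp only [kuraPotential, mul_sub, Finset.sum_sub_distrib, ← Finset.sum_mul, hΩ, zero_mul,
    sub_zero, sub_sub_sub_cancel_right]

lemma two_mul_sum_kuraF_mul (θ v : Fin N → ℝ) :
    2 * ∑ i, kuraF N θ i * v i = ∑ i, ∑ j, -Real.sin (θ i - θ j) * (v i - v j) := by
  have hswap : ∑ i, kuraF N θ i * v i = ∑ i, ∑ j, Real.sin (θ i - θ j) * v j := by
    simp only [kuraF, Finset.sum_mul]
    exact Finset.sum_comm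
  rw [two_mul]
  nth_rewrite 2 [hswap]
  simp only [kuraF, Finset.sum_mul, ← Finset.sum_add_distrib]
  refine Finset.sum_congr rfl fun i _ => Finset.sum_congr rfl fun j _ => ?_
  rw [← neg_sub (θ i) (θ j), Real.sin_neg]
  ring

lemma hasFDerivAt_kuraPotential (γ : ℝ) (Ω θ : Fin N → ℝ) :
    HasFDerivAt (kuraPotential γ Ω)
      (∑ i, kuraField γ Ω θ i • (ContinuousLinearMap.proj i : (Fin N → ℝ) →L[ℝ] ℝ)) θ := by
  have hlin := HasFDerivAt.fun_sum (u := univ) fun i _ =>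
    (hasFDerivAt_apply (𝕜 := ℝ) i θ).const_mul (Ω i)
  have hcos := HasFDerivAt.fun_sum (u := univ) fun i _ =>
    HasFDerivAt.fun_sum (u := univ) fun j _ =>
      ((hasFDerivAt_apply (𝕜 := ℝ) i θ).fun_sub (hasFDerivAt_apply j θ)).cos
  refine (hlin.add (hcos.const_mul (γ / 2))).congr_fderiv
    (ContinuousLinearMap.ext fun v => ?_)
  simp only [_root_.add_apply, _root_.sum_apply, _root_.smul_apply, _root_.sub_apply,
    ContinuousLinearMap.proj_apply, smul_eq_mul, ← two_mul_sum_kuraF_mul, kuraField, add_mul,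
    Finset.sum_add_distrib, mul_assoc, ← Finset.mul_sum]
  ring

lemma kuraField_eq_zero_of_isMaxOn {s : Set (Fin N → ℝ)} (hmax : IsMaxOn (kuraPotential γ Ω) s θ)
    (hcone : kuraField γ Ω θ ∈ posTangentConeAt s θ) : kuraField γ Ω θ = 0 := by
  have hle : ∑ i, kuraField γ Ω θ i * kuraField γ Ω θ i ≤ 0 := by
    simpa using hmax.localize.hasFDerivWithinAt_nonpos
      (hasFDerivAt_kuraPotential γ Ω θ).hasFDerivWithinAt hcone
  exact dotProduct_self_eq_zero.1 (hle.antisymm (Finset.sum_nonneg fun i _ => mul_self_nonneg _))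

lemma one_le_sin_add_cos {x : ℝ} (h₀ : 0 ≤ x) (h₁ : x ≤ π / 2) : 1 ≤ Real.sin x + Real.cos x := by
  have hsin := Real.sin_nonneg_of_nonneg_of_le_pi h₀ (by linarith)
  have hcos := Real.cos_nonneg_of_neg_pi_div_two_le_of_le (by linarith) h₁
  nlinarith [Real.sin_sq_add_cos_sq x, mul_nonneg hsin hcos]

lemma natCast_le_kuraF_sub (hθ : θ ∈ phaseCohesiveSet (Fin N) (π / 2)) {i k : Fin N}
    (hik : θ i - θ k = π / 2) : (N : ℝ) ≤ kuraF N θ k - kuraF N θ i := by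
  have hterm (j : Fin N) : 1 ≤ Real.sin (θ j - θ k) - Real.sin (θ j - θ i) := by
    have hcos : Real.sin (θ j - θ i) = -Real.cos (θ j - θ k) := by
      rw [← Real.sin_sub_pi_div_two, ← hik, sub_sub_sub_cancel_right]
    rw [hcos, sub_neg_eq_add]
    exact one_le_sin_add_cos (by linarith [hθ i j]) (hθ j k)
  simpa [kuraF, Finset.sum_sub_distrib] using Finset.sum_le_sum fun j (_ : j ∈ univ) => hterm j

lemma exists_kuraField_eq_zero [NeZero N] (hΩ : ∑ i, Ω i = 0)
    (hspread : ∀ i k, Ω i - Ω k < γ * N) :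
    ∃ θ : Fin N → ℝ, (∀ i j, θ i - θ j < π / 2) ∧ kuraField γ Ω θ = 0 := by
  have hγ : 0 < γ :=
    pos_of_mul_pos_left (by simpa using hspread 0 0) (Nat.cast_nonneg N)
  obtain ⟨θ, hθ, hmax⟩ := exists_isMaxOn_phaseCohesiveSet Real.pi_div_two_pos.le
    (continuous_kuraPotential γ Ω) (kuraPotential_sub_const hΩ γ)
  have hinward (i j : Fin N) (hij : θ i - θ j = π / 2) :
      kuraField γ Ω θ i < kuraField γ Ω θ j := by
    have hpull := mul_le_mul_of_nonneg_left (natCast_le_kuraF_sub hθ hij) hγ.le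
    simp only [kuraField]
    linarith [hspread i j]
  have hzero := kuraField_eq_zero_of_isMaxOn hmax
    (mem_posTangentConeAt_phaseCohesiveSet hθ hinward)
  refine ⟨θ, fun i j => (hθ i j).lt_of_ne fun hij => ?_, hzero⟩
  simpa [hzero] using hinward i j hij

lemma mem_syncSet_of_forall_sub_lt [NeZero N] {ω : Fin N → ℝ}
    (hω : ∀ i k, ω i - ω k < γ * N) : ω ∈ syncSet N γ := by
  have hsum : ∑ i, (ω i - (∑ j, ω j) / N) = 0 := by
    simp [mul_div_cancel₀ _ (NeZero.ne (N : ℝ))]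
  obtain ⟨θ, hθ, hzero⟩ := exists_kuraField_eq_zero hsum fun i k => by simpa using hω i k
  have hpos := Jmat_pos_of_ne hθ
  have hsymm := isSymm_Jmat θ
  have hrow := sum_Jmat_eq_zero θ
  exact ⟨θ, congrFun hzero,
    posSemidef_neg_of_sum_eq_zero hsymm hrow fun i j hij => (hpos i j hij).le,
    finrank_ker_toLin'_eq_one hsymm hrow hpos⟩

end Equilibrium

section Gaussian

lemma integral_exp_neg_sq_eq_erf (x : ℝ) :
    ∫ t in -x..x, Real.exp (-t ^ 2) = √π * erf x := by
  have hint (a b : ℝ) : IntervalIntegrable (fun t : ℝ => Real.exp (-t ^ 2)) volume a b :=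
    Continuous.intervalIntegrable (by fun_prop) a b
  have heven : ∫ t in -x..0, Real.exp (-t ^ 2) = ∫ t in 0..x, Real.exp (-t ^ 2) := by
    have hflip :=
      intervalIntegral.integral_comp_neg (a := 0) (b := x) fun t : ℝ => Real.exp (-t ^ 2)
    simpa only [neg_sq, neg_zero, eq_comm] using hflip
  rw [← intervalIntegral.integral_add_adjacent_intervals (hint _ 0) (hint 0 _), heven, erf]
  field_simp
  ring

lemma gaussianReal_real_Ioo_eq_erf (μ : ℝ) {v : NNReal} (hv : v ≠ 0) {a : ℝ} (ha : 0 ≤ a) :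
    (gaussianReal μ v).real (Set.Ioo (μ - a) (μ + a)) = erf (a / √(2 * v)) := by
  have hs : √(2 * (v : ℝ)) ≠ 0 := by positivity
  have hpdf (x : ℝ) : gaussianPDFReal μ v x =
      (√π * √(2 * v))⁻¹ * Real.exp (-(x / √(2 * v) - μ / √(2 * v)) ^ 2) := by
    rw [gaussianPDFReal, ← sub_div, div_pow, Real.sq_sqrt (by positivity), neg_div,
      ← Real.sqrt_mul Real.pi_nonneg, mul_left_comm, mul_assoc]
  rw [measureReal_def, gaussianReal_apply_eq_integral μ hv,
    ENNReal.toReal_ofReal (integral_nonneg fun x => gaussianPDFReal_nonneg μ v x),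
    ← integral_Ioc_eq_integral_Ioo, ← intervalIntegral.integral_of_le (by linarith)]
  simp only [hpdf]
  rw [intervalIntegral.integral_const_mul,
    intervalIntegral.integral_comp_div_sub (fun t => Real.exp (-t ^ 2)) hs, ← sub_div, ← sub_div,
    sub_sub_cancel_left, add_sub_cancel_left, neg_div, integral_exp_neg_sq_eq_erf, smul_eq_mul]
  field_simp

end Gaussian

theorem stmt17 (N : ℕ) (hN : 2 ≤ N) (γ : ℝ) (hγ : 0 < γ) :
    erf (γ * N / (2 * Real.sqrt 2)) ^ N ≤ Psync γ N := by
  have : NeZero N := ⟨by omega⟩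
  set I := Set.Ioo (-(γ * N / 2)) (γ * N / 2)
  have hbox : (Set.univ.pi fun _ : Fin N => I) ⊆ syncSet N γ := fun ω hω =>
    mem_syncSet_of_forall_sub_lt fun i k => by linarith [(hω i trivial).2, (hω k trivial).1]
  have hI : (gaussianReal 0 1).real I = erf (γ * N / (2 * √2)) := by
    simpa [I, div_div] using
      gaussianReal_real_Ioo_eq_erf 0 one_ne_zero (a := γ * N / 2) (by positivity)
  calc erf (γ * N / (2 * √2)) ^ N
      = (Measure.pi fun _ : Fin N => gaussianReal 0 1).real (Set.univ.pi fun _ => I) := by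
        simp [← hI, measureReal_def, Measure.pi_pi]
    _ ≤ Psync γ N := measureReal_mono hbox
end

section
/- Define φ(N) := √(2 ln N)/(N+1). Then: (i) for every δ with 0 < δ < 1, lim_{N→∞} P_sync(δ φ(N), N) = 0; and (ii) for every δ ≥ 2, lim_{N→∞} P_sync(δ φ(N), N) = 1. In particular, for every fixed γ > 0, lim_{N→∞} P_sync(γ/N, N) = 0, so in the classical 1/N coupling scaling the probability of full synchrony tends to zero. -/
open Real Matrix Finset MeasureTheory ProbabilityTheory

/-- The critical coupling scale `φ(N) = √(2 ln N) / (N + 1)`. -/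
noncomputable def phi (N : ℕ) : ℝ := Real.sqrt (2 * Real.log N) / (N + 1)

/-!
In a frame where the order parameter `∑ exp (i θ_j)` is real, the locking equations decouple into
`ω_i - ω̄ = r sin θ_i` with `r = γ ∑ cos θ_j`, and the Jacobian becomes a rank-two perturbation of
a diagonal matrix: with `c = cos θ` and `s = sin θ` it is `c cᵀ + s sᵀ - (∑ c_j) diag c`, which is
stable as soon as `∑ s_j² / c_j < ∑ c_j`. Everything reduces to the scalar equation
`r² = γ ∑ √(r² - (ω_i - ω̄)²)`. Its right-hand side is concave in `r²`, so past any point where it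
exceeds `r²` there is a root at which it crosses downwards, and that downward crossing is exactly
the stability criterion.

For Gaussian frequencies `max |ω_i| ~ √(2 ln N)` while the empirical second moment is `O(1)`, so at
`r = a √(2 ln N)` with `a > 1` the right-hand side is about `γ N r`: a root exists as soon as
`γ N > a √(2 ln N)`. Conversely locking forces `|ω_i - ω̄| ≤ |γ| N` for every `i`. The threshold is
therefore sharp, at `γ N ~ √(2 ln N)`.
-/

open Filter Topology

section StableLockedStates

variable {ι : Type*} [Fintype ι]

theorem sum_mul_mul_sum_mul_sub_sq (c x : ι → ℝ) (hc : ∑ i, c i ≠ 0) :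
    (∑ i, c i) * ∑ i, c i * (x i - (∑ j, c j * x j) / ∑ j, c j) ^ 2 =
      (∑ i, c i) * ∑ i, c i * x i ^ 2 - (∑ i, c i * x i) ^ 2 := by
  set a := (∑ j, c j * x j) / ∑ j, c j
  have haS : a * ∑ i, c i = ∑ i, c i * x i := div_mul_cancel₀ _ hc
  have hexpand : ∑ i, c i * (x i - a) ^ 2 =
      ∑ i, c i * x i ^ 2 - 2 * a * ∑ i, c i * x i + a ^ 2 * ∑ i, c i := by
    rw [mul_sum, mul_sum, ← sum_sub_distrib, ← sum_add_distrib]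
    exact sum_congr rfl fun i _ => by ring
  rw [hexpand, ← haS]
  ring

theorem sq_sum_mul_le_of_sum_eq_zero {c s : ι → ℝ} (hc : ∀ i, 0 < c i) (hs : ∑ i, s i = 0)
    (x : ι → ℝ) (a : ℝ) :
    (∑ i, s i * x i) ^ 2 ≤ (∑ i, s i ^ 2 / c i) * ∑ i, c i * (x i - a) ^ 2 := by
  have hcenter : ∑ i, s i * x i = ∑ i, s i * (x i - a) := by
    simp only [mul_sub, sum_sub_distrib, ← sum_mul, hs, zero_mul, sub_zero]
  rw [hcenter]
  refine sum_sq_le_sum_mul_sum_of_sq_le_mul _ (fun i _ => div_nonneg (sq_nonneg _) (hc i).le)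
    (fun i _ => mul_nonneg (hc i).le (sq_nonneg _)) fun i _ => le_of_eq ?_
  have := (hc i).ne'
  field_simp

/-- A phase configuration whose order parameter `∑ exp (i θ_j)` is real, lying in the open
half-circle around the direction of the order parameter, and satisfying the mean-field criterion
`∑ sin² θ_i / cos θ_i < ∑ cos θ_i` for linear stability. -/
structure IsStableLocked (θ : ι → ℝ) : Prop where
  sum_sin : ∑ i, sin (θ i) = 0
  cos_pos : ∀ i, 0 < cos (θ i)
  sum_sin_sq_div_cos_lt : ∑ i, sin (θ i) ^ 2 / cos (θ i) < ∑ i, cos (θ i)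

namespace IsStableLocked

variable {θ : ι → ℝ}

theorem sum_cos_pos (h : IsStableLocked θ) : 0 < ∑ i, cos (θ i) :=
  (sum_nonneg fun i _ => div_nonneg (sq_nonneg _) (h.cos_pos i).le).trans_lt
    h.sum_sin_sq_div_cos_lt

theorem gap_mul_sum_le (h : IsStableLocked θ) (x : ι → ℝ) :
    (∑ i, cos (θ i) - ∑ i, sin (θ i) ^ 2 / cos (θ i)) *
        ∑ i, cos (θ i) * (x i - (∑ j, cos (θ j) * x j) / ∑ j, cos (θ j)) ^ 2 ≤
      (∑ i, cos (θ i)) * ∑ i, cos (θ i) * x i ^ 2 -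
        (∑ i, cos (θ i) * x i) ^ 2 - (∑ i, sin (θ i) * x i) ^ 2 := by
  rw [sub_mul, sum_mul_mul_sum_mul_sub_sq _ x h.sum_cos_pos.ne']
  exact sub_le_sub_left (sq_sum_mul_le_of_sum_eq_zero h.cos_pos h.sum_sin x _) _

end IsStableLocked

end StableLockedStates

section Jacobian

variable {N : ℕ} {θ : Fin N → ℝ}

theorem kuraF_eq_of_sum_sin_eq_zero (hs : ∑ j, sin (θ j) = 0) (i : Fin N) :
    kuraF N θ i = -((∑ j, cos (θ j)) * sin (θ i)) := by
  simp only [kuraF, sin_sub, sum_sub_distrib, ← sum_mul, hs]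
  ring

theorem Jmat_isHermitian (N : ℕ) (θ : Fin N → ℝ) : (Jmat N θ).IsHermitian := by
  refine IsHermitian.ext fun i j => ?_
  by_cases h : i = j
  · rw [h, star_trivial]
  · simp only [Jmat, of_apply, h, Ne.symm h, if_false, star_trivial]
    rw [← cos_neg, neg_sub]

theorem Jmat_mulVec_one (N : ℕ) (θ : Fin N → ℝ) : Jmat N θ *ᵥ 1 = 0 := by
  ext i
  have hoff : ∑ j ∈ univ \ {i}, Jmat N θ i j = ∑ k ∈ univ \ {i}, cos (θ k - θ i) :=
    sum_congr rfl fun j hj => by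
      have hij : i ≠ j := by simpa [eq_comm] using hj
      rw [Jmat, of_apply, if_neg hij, ← cos_neg, neg_sub]
  rw [mulVec, dotProduct_one, ← sum_sdiff (subset_univ {i}), hoff, sum_singleton]
  simp [Jmat]

theorem Jmat_eq_of_sum_sin_eq_zero (hs : ∑ j, sin (θ j) = 0) :
    Jmat N θ = vecMulVec (fun i => cos (θ i)) (fun i => cos (θ i)) +
      vecMulVec (fun i => sin (θ i)) (fun i => sin (θ i)) -
      diagonal fun i => (∑ j, cos (θ j)) * cos (θ i) := by
  ext i j
  rcases eq_or_ne i j with rfl | hij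
  · have hdiag : ∑ k ∈ univ \ {i}, cos (θ k - θ i) = (∑ k, cos (θ k)) * cos (θ i) - 1 := by
      rw [sum_sdiff_eq_sub (subset_univ {i})]
      simp only [cos_sub, sum_add_distrib, ← sum_mul, hs, sum_singleton, ← sq,
        cos_sq_add_sin_sq, zero_mul, add_zero]
    simp only [Jmat, of_apply, if_true, hdiag, Matrix.sub_apply, Matrix.add_apply,
      vecMulVec_apply, diagonal_apply_eq, ← sq, cos_sq_add_sin_sq]
    ring
  · simp [Jmat, hij, vecMulVec_apply, cos_sub]

theorem dotProduct_neg_Jmat_mulVec (hs : ∑ j, sin (θ j) = 0) (x : Fin N → ℝ) :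
    x ⬝ᵥ (-Jmat N θ *ᵥ x) = (∑ i, cos (θ i)) * ∑ i, cos (θ i) * x i ^ 2 -
      (∑ i, cos (θ i) * x i) ^ 2 - (∑ i, sin (θ i) * x i) ^ 2 := by
  have hdiag : x ⬝ᵥ (diagonal (fun i => (∑ j, cos (θ j)) * cos (θ i)) *ᵥ x) =
      (∑ i, cos (θ i)) * ∑ i, cos (θ i) * x i ^ 2 := by
    simp only [dotProduct, mulVec_diagonal, mul_sum]
    exact sum_congr rfl fun i _ => by ring
  have hrank_one (u : Fin N → ℝ) : x ⬝ᵥ (vecMulVec u u *ᵥ x) = (∑ i, u i * x i) ^ 2 := by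
    rw [vecMulVec_mulVec, dotProduct_smul, dotProduct_comm x u]
    simp [dotProduct, sq]
  rw [Jmat_eq_of_sum_sin_eq_zero hs, neg_mulVec, dotProduct_neg, sub_mulVec, add_mulVec,
    dotProduct_sub, dotProduct_add, hdiag, hrank_one, hrank_one]
  ring

namespace IsStableLocked

theorem posSemidef_neg_Jmat (h : IsStableLocked θ) : (-Jmat N θ).PosSemidef := by
  refine .of_dotProduct_mulVec_nonneg (Jmat_isHermitian N θ).neg fun x => ?_
  rw [star_trivial, dotProduct_neg_Jmat_mulVec h.sum_sin]
  exact (mul_nonneg (sub_nonneg.2 h.sum_sin_sq_div_cos_lt.le)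
    (sum_nonneg fun i _ => mul_nonneg (h.cos_pos i).le (sq_nonneg _))).trans (h.gap_mul_sum_le x)

theorem eq_of_Jmat_mulVec_eq_zero (h : IsStableLocked θ) {x : Fin N → ℝ}
    (hx : Jmat N θ *ᵥ x = 0) (i : Fin N) :
    x i = (∑ j, cos (θ j) * x j) / ∑ j, cos (θ j) := by
  have hnonneg : ∀ j ∈ univ,
      0 ≤ cos (θ j) * (x j - (∑ k, cos (θ k) * x k) / ∑ k, cos (θ k)) ^ 2 :=
    fun j _ => mul_nonneg (h.cos_pos j).le (sq_nonneg _)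
  have hgap := h.gap_mul_sum_le x
  rw [← dotProduct_neg_Jmat_mulVec h.sum_sin, neg_mulVec, hx, neg_zero, dotProduct_zero] at hgap
  have hvar := nonpos_of_mul_nonpos_right hgap (sub_pos.2 h.sum_sin_sq_div_cos_lt)
  have hterm := (sum_eq_zero_iff_of_nonneg hnonneg).1 (hvar.antisymm (sum_nonneg hnonneg)) i
    (mem_univ i)
  rcases mul_eq_zero.1 hterm with hcos | hdev
  · exact absurd hcos (h.cos_pos i).ne'
  · exact sub_eq_zero.1 (pow_eq_zero_iff two_ne_zero |>.1 hdev)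

theorem ker_Jmat (h : IsStableLocked θ) :
    LinearMap.ker (toLin' (Jmat N θ)) = Submodule.span ℝ {1} := by
  ext x
  rw [LinearMap.mem_ker, toLin'_apply, Submodule.mem_span_singleton]
  constructor
  · intro hx
    exact ⟨(∑ j, cos (θ j) * x j) / ∑ j, cos (θ j), funext fun i => by
      simpa using (h.eq_of_Jmat_mulVec_eq_zero hx i).symm⟩
  · rintro ⟨a, rfl⟩
    rw [mulVec_smul, Jmat_mulVec_one, smul_zero]

theorem finrank_ker_Jmat (h : IsStableLocked θ) :
    Module.finrank ℝ (LinearMap.ker (toLin' (Jmat N θ))) = 1 := by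
  obtain ⟨i, -, -⟩ := exists_ne_zero_of_sum_ne_zero h.sum_cos_pos.ne'
  rw [h.ker_Jmat]
  exact finrank_span_singleton fun hone => one_ne_zero (congrFun hone i)

end IsStableLocked

end Jacobian

section SelfConsistency

variable {ι : Type*} [Fintype ι] {w : ι → ℝ} {γ r : ℝ}

theorem sqrt_le_sqrt_add_sub_div {x y : ℝ} (hx : 0 ≤ x) (hy : 0 < y) :
    √x ≤ √y + (x - y) / 2 * (√y)⁻¹ := by
  have hsy := sqrt_pos.2 hy
  have hamgm : 2 * √x * √y ≤ x + y := by
    simpa only [sq_sqrt hx, sq_sqrt hy.le] using two_mul_le_add_sq (√x) (√y)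
  rw [← mul_le_mul_iff_left₀ hsy, add_mul, mul_assoc _ (√y)⁻¹, inv_mul_cancel₀ hsy.ne',
    mul_self_sqrt hy.le]
  linarith

theorem sub_mul_sum_inv_sqrt_le {R : ℝ} (hR : ∀ i, w i ^ 2 ≤ R ^ 2) (hr : ∀ i, w i ^ 2 < r ^ 2) :
    (r ^ 2 - R ^ 2) * ∑ i, (√(r ^ 2 - w i ^ 2))⁻¹ ≤
      2 * (∑ i, √(r ^ 2 - w i ^ 2) - ∑ i, √(R ^ 2 - w i ^ 2)) := by
  rw [← sum_sub_distrib, mul_sum, mul_sum]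
  refine sum_le_sum fun i _ => ?_
  have := sqrt_le_sqrt_add_sub_div (sub_nonneg.2 (hR i)) (sub_pos.2 (hr i))
  linarith

theorem exists_selfConsistent_root {R : ℝ} (hw : ∀ i, |w i| < R)
    (hR : R ^ 2 < γ * ∑ i, √(R ^ 2 - w i ^ 2)) :
    ∃ r, R < r ∧ r ^ 2 = γ * ∑ i, √(r ^ 2 - w i ^ 2) := by
  have hpos := (sq_nonneg R).trans_lt hR
  have hγ : 0 < γ := pos_of_mul_pos_left hpos (sum_nonneg fun i _ => sqrt_nonneg _)
  obtain ⟨i₀, -, -⟩ := exists_ne_zero_of_sum_ne_zero (right_ne_zero_of_mul hpos.ne')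
  have hR0 : 0 ≤ R := (abs_nonneg _).trans (hw i₀).le
  set B := R + γ * Fintype.card ι
  have hRB : R ≤ B := le_add_of_nonneg_right (by positivity)
  have hupper : γ * ∑ i, √(B ^ 2 - w i ^ 2) ≤ B ^ 2 := by
    have hterm : ∀ i ∈ univ, √(B ^ 2 - w i ^ 2) ≤ B := fun i _ =>
      sqrt_le_iff.2 ⟨hR0.trans hRB, sub_le_self _ (sq_nonneg _)⟩
    calc γ * ∑ i, √(B ^ 2 - w i ^ 2) ≤ γ * (Fintype.card ι * B) := by
          gcongr
          simpa using sum_le_card_nsmul _ _ _ hterm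
      _ ≤ B ^ 2 := by nlinarith
  have hcont : ContinuousOn (fun r => γ * ∑ i, √(r ^ 2 - w i ^ 2) - r ^ 2) (Set.Icc R B) := by
    fun_prop
  obtain ⟨r, ⟨hRr, -⟩, hroot⟩ := intermediate_value_Icc' hRB hcont
    ⟨sub_nonpos.2 hupper, sub_nonneg.2 hR.le⟩
  rw [sub_eq_zero] at hroot
  refine ⟨r, hRr.lt_of_ne ?_, hroot.symm⟩
  rintro rfl
  exact hR.ne' hroot

theorem sum_inv_sqrt_lt_two {R : ℝ} (hw : ∀ i, |w i| < R)
    (hR : R ^ 2 < γ * ∑ i, √(R ^ 2 - w i ^ 2)) (hRr : R < r)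
    (hr : r ^ 2 = γ * ∑ i, √(r ^ 2 - w i ^ 2)) :
    γ * ∑ i, (√(r ^ 2 - w i ^ 2))⁻¹ < 2 := by
  have hpos := (sq_nonneg R).trans_lt hR
  have hγ : 0 < γ := pos_of_mul_pos_left hpos (sum_nonneg fun i _ => sqrt_nonneg _)
  obtain ⟨i₀, -, -⟩ := exists_ne_zero_of_sum_ne_zero (right_ne_zero_of_mul hpos.ne')
  have hR0 : 0 ≤ R := (abs_nonneg _).trans (hw i₀).le
  have hsq : R ^ 2 < r ^ 2 := pow_lt_pow_left₀ hRr hR0 two_ne_zero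
  have hwR (i) : w i ^ 2 < R ^ 2 := sq_lt_sq' (abs_lt.1 (hw i)).1 (abs_lt.1 (hw i)).2
  have htangent := mul_le_mul_of_nonneg_left
    (sub_mul_sum_inv_sqrt_le (fun i => (hwR i).le) fun i => (hwR i).trans hsq) hγ.le
  refine lt_of_mul_lt_mul_left ?_ (sub_pos.2 hsq).le
  linarith

theorem cos_arcsin_div (hr : 0 < r) (x : ℝ) : cos (arcsin (x / r)) = √(r ^ 2 - x ^ 2) / r := by
  rw [cos_arcsin, div_pow, one_sub_div (pow_pos hr 2).ne', sqrt_div' _ (sq_nonneg r),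
    sqrt_sq hr.le]

theorem sin_arcsin_div {x : ℝ} (hr : 0 < r) (hx : |x| ≤ r) : sin (arcsin (x / r)) = x / r := by
  have h : |x / r| ≤ 1 := by rwa [abs_div, abs_of_pos hr, div_le_one hr]
  exact sin_arcsin (abs_le.1 h).1 (abs_le.1 h).2

theorem mul_sum_cos_arcsin_div (hr : 0 < r) (hroot : r ^ 2 = γ * ∑ i, √(r ^ 2 - w i ^ 2)) :
    γ * ∑ i, cos (arcsin (w i / r)) = r := by
  simp only [cos_arcsin_div hr, ← sum_div]
  rw [← mul_div_assoc, ← hroot, sq, mul_self_div_self]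

theorem isStableLocked_arcsin (hr : 0 < r) (hw : ∀ i, |w i| < r) (hw0 : ∑ i, w i = 0)
    (hroot : r ^ 2 = γ * ∑ i, √(r ^ 2 - w i ^ 2))
    (hcross : γ * ∑ i, (√(r ^ 2 - w i ^ 2))⁻¹ < 2) :
    IsStableLocked fun i => arcsin (w i / r) := by
  have hsqrt (i) : 0 < √(r ^ 2 - w i ^ 2) :=
    sqrt_pos.2 (sub_pos.2 (sq_lt_sq' (abs_lt.1 (hw i)).1 (abs_lt.1 (hw i)).2))
  have hcos (i) : 0 < cos (arcsin (w i / r)) := by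
    rw [cos_arcsin_div hr]
    exact div_pos (hsqrt i) hr
  refine ⟨?_, hcos, ?_⟩
  · simp only [sin_arcsin_div hr (hw _).le, ← sum_div, hw0, zero_div]
  have hγ : 0 < γ := pos_of_mul_pos_left (hroot ▸ pow_pos hr 2) (sum_nonneg fun i _ => (hsqrt i).le)
  have hterm (i) : sin (arcsin (w i / r)) ^ 2 / cos (arcsin (w i / r)) =
      r * (√(r ^ 2 - w i ^ 2))⁻¹ - cos (arcsin (w i / r)) := by
    have hinv : (cos (arcsin (w i / r)))⁻¹ = r * (√(r ^ 2 - w i ^ 2))⁻¹ := by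
      rw [cos_arcsin_div hr, inv_div, div_eq_mul_inv]
    rw [← hinv, sin_sq, sub_div, sq, mul_self_div_self, one_div]
  simp only [hterm, sum_sub_distrib, ← mul_sum]
  rw [sub_lt_iff_lt_add, ← two_mul, ← mul_lt_mul_iff_right₀ hγ]
  linarith [mul_lt_mul_of_pos_left hcross hr, mul_sum_cos_arcsin_div hr hroot]

end SelfConsistency

section Synchronization

variable {N : ℕ} {γ : ℝ} {ω : Fin N → ℝ}

/-- The natural frequencies `ω_i - (1/N) ∑_j ω_j` in the frame rotating with the mean frequency. -/
noncomputable def detuning (ω : Fin N → ℝ) : Fin N → ℝ :=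
  fun i => ω i - (∑ j, ω j) / N

theorem sum_detuning (ω : Fin N → ℝ) : ∑ i, detuning ω i = 0 := by
  rcases eq_or_ne (N : ℝ) 0 with h | h
  · have : IsEmpty (Fin N) := Fintype.card_eq_zero_iff.1 (by simpa using h)
    exact sum_of_isEmpty _
  · simp [detuning, sum_sub_distrib, mul_div_cancel₀ _ h]

theorem sum_detuning_sq_le (ω : Fin N → ℝ) : ∑ i, detuning ω i ^ 2 ≤ ∑ i, ω i ^ 2 := by
  set m := (∑ j, ω j) / N with hm
  have hsplit (i) : ω i ^ 2 = detuning ω i ^ 2 + (2 * m * detuning ω i + m ^ 2) := by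
    rw [detuning, ← hm]
    ring
  calc ∑ i, detuning ω i ^ 2
      ≤ ∑ i, detuning ω i ^ 2 + ∑ _i : Fin N, m ^ 2 :=
        le_add_of_nonneg_right (sum_nonneg fun _ _ => sq_nonneg m)
    _ = ∑ i, ω i ^ 2 := by
        simp only [hsplit, sum_add_distrib, ← mul_sum, sum_detuning, mul_zero, zero_add]

theorem sq_mean_le (ω : Fin N → ℝ) : ((∑ i, ω i) / N) ^ 2 ≤ (∑ i, ω i ^ 2) / N := by
  rcases eq_or_ne N 0 with rfl | hN
  · simp
  · have hcs : (∑ i, ω i) ^ 2 ≤ N * ∑ i, ω i ^ 2 := by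
      simpa using sq_sum_le_card_mul_sum_sq (s := univ) (f := ω)
    have : (0 : ℝ) < N := by positivity
    rw [div_pow, div_le_div_iff₀ (by positivity) this, sq (N : ℝ), ← mul_assoc]
    gcongr
    linarith

theorem mem_syncSet_of_selfConsistent_lt {R : ℝ} (hR : ∀ i, |detuning ω i| < R)
    (hlt : R ^ 2 < γ * ∑ i, √(R ^ 2 - detuning ω i ^ 2)) : ω ∈ syncSet N γ := by
  obtain ⟨i₀, -, -⟩ := exists_ne_zero_of_sum_ne_zero
    (right_ne_zero_of_mul ((sq_nonneg R).trans_lt hlt).ne')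
  obtain ⟨r, hRr, hroot⟩ := exists_selfConsistent_root hR hlt
  have hr : 0 < r := ((abs_nonneg _).trans_lt (hR i₀)).trans hRr
  have hw (i) : |detuning ω i| < r := (hR i).trans hRr
  have hstable := isStableLocked_arcsin hr hw (sum_detuning ω) hroot
    (sum_inv_sqrt_lt_two hR hlt hRr hroot)
  refine ⟨fun i => arcsin (detuning ω i / r), fun i => ?_, hstable.posSemidef_neg_Jmat,
    hstable.finrank_ker_Jmat⟩
  rw [kuraF_eq_of_sum_sin_eq_zero hstable.sum_sin, sin_arcsin_div hr (hw i).le, mul_neg,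
    ← mul_assoc, mul_sum_cos_arcsin_div hr hroot, mul_div_cancel₀ _ hr.ne']
  exact sub_self _

theorem mem_syncSet_of_sum_sq_lt {R : ℝ} (hγ : 0 ≤ γ) (hR0 : 0 < R)
    (hR : ∀ i, |detuning ω i| < R) (hlt : R ^ 3 < γ * (N * R ^ 2 - ∑ i, ω i ^ 2)) :
    ω ∈ syncSet N γ := by
  refine mem_syncSet_of_selfConsistent_lt hR (lt_of_mul_lt_mul_left ?_ hR0.le)
  have hterm (i) : R ^ 2 - detuning ω i ^ 2 ≤ R * √(R ^ 2 - detuning ω i ^ 2) := by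
    have hnonneg : 0 ≤ R ^ 2 - detuning ω i ^ 2 :=
      sub_nonneg.2 (sq_le_sq' (abs_lt.1 (hR i)).1.le (abs_lt.1 (hR i)).2.le)
    nth_rw 1 [← mul_self_sqrt hnonneg]
    gcongr
    exact sqrt_le_iff.2 ⟨hR0.le, sub_le_self _ (sq_nonneg _)⟩
  calc R * R ^ 2 = R ^ 3 := by ring
    _ < γ * (N * R ^ 2 - ∑ i, ω i ^ 2) := hlt
    _ ≤ γ * ∑ i, (R ^ 2 - detuning ω i ^ 2) := by
        rw [sum_sub_distrib, sum_const, card_univ, Fintype.card_fin, nsmul_eq_mul]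
        exact mul_le_mul_of_nonneg_left (sub_le_sub_left (sum_detuning_sq_le ω) _) hγ
    _ ≤ γ * ∑ i, R * √(R ^ 2 - detuning ω i ^ 2) := by gcongr with i; exact hterm i
    _ = R * (γ * ∑ i, √(R ^ 2 - detuning ω i ^ 2)) := by rw [← mul_sum]; ring

theorem abs_kuraF_le (N : ℕ) (θ : Fin N → ℝ) (i : Fin N) : |kuraF N θ i| ≤ N := by
  refine (abs_sum_le_sum_abs _ _).trans ?_
  simpa using sum_le_card_nsmul univ (fun j => |sin (θ j - θ i)|) 1 fun j _ => abs_sin_le_one _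

theorem abs_detuning_le_of_mem_syncSet (hω : ω ∈ syncSet N γ) (i : Fin N) :
    |detuning ω i| ≤ |γ| * N := by
  obtain ⟨θ, hlocked, -, -⟩ := hω
  rw [detuning, eq_neg_of_add_eq_zero_left (hlocked i), abs_neg, abs_mul]
  gcongr
  exact abs_kuraF_le N θ i

end Synchronization

section ProductMeasure

variable {ι : Type*} [Fintype ι] {α : ι → Type*} [∀ i, MeasurableSpace (α i)]
  (μ : ∀ i, Measure (α i)) [∀ i, IsProbabilityMeasure (μ i)]

theorem measureReal_pi_exists_mem_le {s : ∀ i, Set (α i)} (hs : ∀ i, MeasurableSet (s i)) :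
    (Measure.pi μ).real {ω | ∃ i, ω i ∈ s i} ≤ ∑ i, (μ i).real (s i) := by
  rw [Set.ofPred_exists]
  refine (measureReal_iUnion_fintype_le _).trans_eq (sum_congr rfl fun i _ => ?_)
  exact (measurePreserving_eval μ i).measureReal_preimage (hs i).nullMeasurableSet

theorem measureReal_pi_forall_notMem_le {s : ∀ i, Set (α i)} (hs : ∀ i, MeasurableSet (s i)) :
    (Measure.pi μ).real {ω | ∀ i, ω i ∉ s i} ≤ exp (-∑ i, (μ i).real (s i)) := by
  have hpi : {ω : ∀ i, α i | ∀ i, ω i ∉ s i} = Set.univ.pi fun i => (s i)ᶜ := by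
    ext ω
    simp
  calc (Measure.pi μ).real {ω | ∀ i, ω i ∉ s i} = ∏ i, (μ i).real (s i)ᶜ := by
        simp [hpi, measureReal_def, Measure.pi_pi]
    _ ≤ ∏ i, exp (-(μ i).real (s i)) := by
        gcongr with i
        rw [probReal_compl_eq_one_sub (hs i)]
        exact one_sub_le_exp_neg _
    _ = exp (-∑ i, (μ i).real (s i)) := by rw [← exp_sum, sum_neg_distrib]

theorem measureReal_pi_le_sum_le {f : ∀ i, α i → ℝ} (hf0 : ∀ i x, 0 ≤ f i x)
    (hf : ∀ i, Integrable (f i) (μ i)) {c : ℝ} (hc : 0 < c) :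
    (Measure.pi μ).real {ω | c ≤ ∑ i, f i (ω i)} ≤ (∑ i, ∫ x, f i x ∂μ i) / c := by
  have hint (i) : Integrable (fun ω : ∀ i, α i => f i (ω i)) (Measure.pi μ) :=
    integrable_comp_eval (hf i)
  rw [le_div_iff₀' hc]
  calc c * (Measure.pi μ).real {ω | c ≤ ∑ i, f i (ω i)}
      ≤ ∫ ω, ∑ i, f i (ω i) ∂Measure.pi μ :=
        mul_meas_ge_le_integral_of_nonneg (ae_of_all _ fun ω => sum_nonneg fun i _ => hf0 i _)
          (integrable_finsetSum _ fun i _ => hint i) c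
    _ = ∑ i, ∫ x, f i x ∂μ i := by
        rw [integral_finsetSum _ fun i _ => hint i]
        exact sum_congr rfl fun i _ => integral_comp_eval (hf i).aestronglyMeasurable

end ProductMeasure

section GaussianTails

open scoped NNReal

theorem measureReal_le_abs_le_of_hasSubgaussianMGF {Ω : Type*} [MeasurableSpace Ω] {μ : Measure Ω}
    {X : Ω → ℝ} {c : ℝ≥0} (hX : HasSubgaussianMGF X c μ) {ε : ℝ} (hε : 0 ≤ ε) :
    μ.real {ω | ε ≤ |X ω|} ≤ 2 * exp (-ε ^ 2 / (2 * c)) := by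
  have hsplit : {ω | ε ≤ |X ω|} = {ω | ε ≤ X ω} ∪ {ω | ε ≤ (-X) ω} := by
    ext ω
    exact le_abs (a := ε) (b := X ω)
  rw [hsplit, two_mul]
  exact (measureReal_union_le _ _).trans
    (add_le_add (hX.measure_ge_le hε) (hX.neg.measure_ge_le hε))

theorem hasSubgaussianMGF_id_gaussianReal (v : ℝ≥0) :
    HasSubgaussianMGF id v (gaussianReal 0 v) where
  integrable_exp_mul t := integrable_exp_mul_gaussianReal t
  mgf_le t := by simp only [mgf_id_gaussianReal, zero_mul, zero_add, le_refl]

theorem sub_mul_gaussianPDFReal_le {m a b : ℝ} {v : ℝ≥0} (hv : v ≠ 0) (hma : m ≤ a)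
    (hab : a ≤ b) : (b - a) * gaussianPDFReal m v b ≤ (gaussianReal m v).real (Set.Ioc a b) := by
  calc (b - a) * gaussianPDFReal m v b = ∫ _x in Set.Ioc a b, gaussianPDFReal m v b := by
        simp [hab]
    _ ≤ ∫ x in Set.Ioc a b, gaussianPDFReal m v x := by
        refine setIntegral_mono_on (integrable_const _)
          (integrable_gaussianPDFReal m v).integrableOn measurableSet_Ioc fun x hx => ?_
        have : (x - m) ^ 2 ≤ (b - m) ^ 2 :=
          pow_le_pow_left₀ (sub_nonneg.2 (hma.trans hx.1.le)) (sub_le_sub_right hx.2 m) 2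
        simp only [gaussianPDFReal_def]
        gcongr
    _ = (gaussianReal m v).real (Set.Ioc a b) := by
        rw [measureReal_def, gaussianReal_apply_eq_integral m hv, ENNReal.toReal_ofReal
          (integral_nonneg fun x => gaussianPDFReal_nonneg _ _ _)]

theorem integral_sq_gaussianReal (v : ℝ≥0) : ∫ x, x ^ 2 ∂gaussianReal 0 v = v := by
  have h := variance_id_gaussianReal (μ := 0) (v := v)
  rwa [variance_of_integral_eq_zero aemeasurable_id integral_id_gaussianReal] at h

end GaussianTails

section GaussianMaximum

/-- The asymptotic size `√(2 ln N)` of the maximum of `N` independent standard Gaussians. -/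
noncomputable def maxScale (N : ℕ) : ℝ := √(2 * log N)

/-- The law of the frequency vector `ω`: `N` independent standard Gaussians. -/
noncomputable abbrev freqLaw (N : ℕ) : Measure (Fin N → ℝ) :=
  Measure.pi fun _ => gaussianReal 0 1

theorem tendsto_maxScale : Tendsto maxScale atTop atTop :=
  tendsto_sqrt_atTop.comp
    ((tendsto_log_atTop.comp tendsto_natCast_atTop_atTop).const_mul_atTop two_pos)

theorem natCast_mul_exp_neg_sq_maxScale {N : ℕ} (hN : N ≠ 0) (t : ℝ) :
    N * exp (-(t * maxScale N) ^ 2 / 2) = exp ((1 - t ^ 2) * (maxScale N ^ 2 / 2)) := by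
  have hsq : maxScale N ^ 2 / 2 = log N := by
    rw [maxScale, sq_sqrt (mul_nonneg two_pos.le (log_natCast_nonneg N)),
      mul_div_cancel_left₀ _ two_ne_zero]
  have hexp : (N : ℝ) = exp (maxScale N ^ 2 / 2) := by
    rw [hsq, exp_log (by positivity)]
  nth_rw 1 [hexp]
  rw [← exp_add]
  ring_nf

theorem tendsto_sq_maxScale_div_two : Tendsto (fun N => maxScale N ^ 2 / 2) atTop atTop :=
  ((tendsto_pow_atTop two_ne_zero).comp tendsto_maxScale).atTop_div_const two_pos

theorem tendsto_freqLaw_exists_mul_maxScale_le_abs {t : ℝ} (ht : 1 < t) :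
    Tendsto (fun N => (freqLaw N).real {ω | ∃ i, t * maxScale N ≤ |ω i|}) atTop (𝓝 0) := by
  have hlim : Tendsto (fun N => 2 * exp ((1 - t ^ 2) * (maxScale N ^ 2 / 2))) atTop (𝓝 0) := by
    simpa using (tendsto_exp_atBot.comp (tendsto_sq_maxScale_div_two.const_mul_atTop_of_neg
      (sub_neg.2 (one_lt_pow₀ ht two_ne_zero)))).const_mul 2
  refine squeeze_zero' (.of_forall fun N => measureReal_nonneg) ?_ hlim
  filter_upwards [eventually_ne_atTop 0] with N hN
  have hmeas : MeasurableSet {x : ℝ | t * maxScale N ≤ |x|} :=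
    measurableSet_le measurable_const measurable_abs
  have hnonneg : 0 ≤ t * maxScale N := mul_nonneg (zero_lt_one.trans ht).le (sqrt_nonneg _)
  calc (freqLaw N).real {ω | ∃ i, t * maxScale N ≤ |ω i|}
      ≤ N * (gaussianReal 0 1).real {x | t * maxScale N ≤ |x|} := by
        simpa using measureReal_pi_exists_mem_le (fun _ : Fin N => gaussianReal 0 1)
          fun _ => hmeas
    _ ≤ N * (2 * exp (-(t * maxScale N) ^ 2 / 2)) := by
        gcongr
        simpa using measureReal_le_abs_le_of_hasSubgaussianMGF
          (hasSubgaussianMGF_id_gaussianReal 1) hnonneg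
    _ = 2 * exp ((1 - t ^ 2) * (maxScale N ^ 2 / 2)) := by
        rw [mul_left_comm, natCast_mul_exp_neg_sq_maxScale hN]

theorem tendsto_natCast_mul_gaussianReal_Ioi_mul_maxScale {s : ℝ} (hs : s < 1) :
    Tendsto (fun N : ℕ => N * (gaussianReal 0 1).real (Set.Ioi (s * maxScale N))) atTop atTop := by
  obtain ⟨u, hu, hu1⟩ := exists_between (max_lt hs one_pos)
  obtain ⟨hsu, hu0⟩ := max_lt_iff.1 hu
  obtain ⟨t, hut, ht1⟩ := exists_between hu1
  have hlim : Tendsto (fun N => ((t - u) * (√(2 * π))⁻¹) *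
      (maxScale N * exp ((1 - t ^ 2) * (maxScale N ^ 2 / 2)))) atTop atTop := by
    refine (tendsto_maxScale.atTop_mul_atTop₀ (tendsto_exp_atTop.comp
      (tendsto_sq_maxScale_div_two.const_mul_atTop ?_))).const_mul_atTop ?_
    · exact sub_pos.2 (pow_lt_one₀ (hu0.trans hut).le ht1 two_ne_zero)
    · exact mul_pos (sub_pos.2 hut) (by positivity)
  refine tendsto_atTop_mono' _ ?_ hlim
  filter_upwards [eventually_ne_atTop 0] with N hN
  have hL : 0 ≤ maxScale N := sqrt_nonneg _
  calc (t - u) * (√(2 * π))⁻¹ * (maxScale N * exp ((1 - t ^ 2) * (maxScale N ^ 2 / 2)))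
      = N * ((t * maxScale N - u * maxScale N) * gaussianPDFReal 0 1 (t * maxScale N)) := by
        rw [← natCast_mul_exp_neg_sq_maxScale hN, gaussianPDFReal_def]
        simp only [NNReal.coe_one, mul_one, sub_zero]
        ring
    _ ≤ N * (gaussianReal 0 1).real (Set.Ioc (u * maxScale N) (t * maxScale N)) := by
        gcongr
        exact sub_mul_gaussianPDFReal_le one_ne_zero (by positivity) (by gcongr)
    _ ≤ N * (gaussianReal 0 1).real (Set.Ioi (s * maxScale N)) := by
        refine mul_le_mul_of_nonneg_left (measureReal_mono ?_) N.cast_nonneg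
        exact Set.Ioc_subset_Ioi_self.trans
          (Set.Ioi_subset_Ioi (mul_le_mul_of_nonneg_right hsu.le hL))

theorem tendsto_freqLaw_forall_le_mul_maxScale {s : ℝ} (hs : s < 1) :
    Tendsto (fun N => (freqLaw N).real {ω | ∀ i, ω i ≤ s * maxScale N}) atTop (𝓝 0) := by
  refine squeeze_zero (fun N => measureReal_nonneg) (fun N => ?_)
    (tendsto_exp_neg_atTop_nhds_zero.comp (tendsto_natCast_mul_gaussianReal_Ioi_mul_maxScale hs))
  simpa using measureReal_pi_forall_notMem_le (fun _ : Fin N => gaussianReal 0 1)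
    fun _ => measurableSet_Ioi (a := s * maxScale N)

theorem tendsto_freqLaw_natCast_mul_maxScale_le_sum_sq :
    Tendsto (fun N => (freqLaw N).real {ω | N * maxScale N ≤ ∑ i, ω i ^ 2}) atTop (𝓝 0) := by
  refine squeeze_zero' (.of_forall fun N => measureReal_nonneg) ?_
    (tendsto_inv_atTop_zero.comp tendsto_maxScale)
  filter_upwards [eventually_ne_atTop 0, tendsto_maxScale.eventually_gt_atTop 0] with N hN hL
  have hN' : (0 : ℝ) < N := by positivity
  have hmarkov := measureReal_pi_le_sum_le (fun _ : Fin N => gaussianReal 0 1)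
    (fun _ x => sq_nonneg x) (fun _ => (memLp_id_gaussianReal 2).integrable_sq)
    (mul_pos hN' hL)
  refine hmarkov.trans_eq ?_
  simp only [integral_sq_gaussianReal, NNReal.coe_one, sum_const, card_univ, Fintype.card_fin,
    nsmul_eq_mul, Function.comp_apply]
  field_simp

end GaussianMaximum

section Threshold

theorem abs_mean_le_mul_maxScale {N : ℕ} {ω : Fin N → ℝ} {ε : ℝ} (hε : 0 ≤ ε)
    (hL : 1 ≤ ε ^ 2 * maxScale N) (hsq : ∑ i, ω i ^ 2 ≤ N * maxScale N) :
    |(∑ i, ω i) / N| ≤ ε * maxScale N := by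
  have hL0 : 0 ≤ maxScale N := sqrt_nonneg _
  refine abs_le_of_sq_le_sq ?_ (by positivity)
  calc ((∑ i, ω i) / N) ^ 2 ≤ (∑ i, ω i ^ 2) / N := sq_mean_le ω
    _ ≤ maxScale N := div_le_of_le_mul₀ (by positivity) hL0 (by linarith)
    _ ≤ ε ^ 2 * maxScale N * maxScale N := le_mul_of_one_le_left hL0 hL
    _ = (ε * maxScale N) ^ 2 := by ring

theorem Psync_eq_measureReal (γ : ℝ) (N : ℕ) : Psync γ N = (freqLaw N).real (syncSet N γ) := rfl

theorem tendsto_Psync_zero {γ : ℕ → ℝ} {δ : ℝ} (hδ : δ < 1)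
    (hγ : ∀ᶠ N in atTop, |γ N| * N ≤ δ * maxScale N) :
    Tendsto (fun N => Psync (γ N) N) atTop (𝓝 0) := by
  obtain ⟨s, hδs, hs⟩ := exists_between hδ
  have hlim := (tendsto_freqLaw_forall_le_mul_maxScale hs).add
    tendsto_freqLaw_natCast_mul_maxScale_le_sum_sq
  rw [add_zero] at hlim
  simp only [Psync_eq_measureReal]
  refine squeeze_zero' (.of_forall fun N => measureReal_nonneg) ?_ hlim
  filter_upwards [hγ, (tendsto_maxScale.const_mul_atTop
    (pow_pos (sub_pos.2 hδs) 2)).eventually_ge_atTop 1] with N hγN hL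
  refine (measureReal_mono fun ω hω => ?_).trans (measureReal_union_le _ _)
  rcases le_total (N * maxScale N) (∑ i, ω i ^ 2) with hsq | hsq
  · exact .inr hsq
  · refine .inl fun i => ?_
    have hmean := abs_mean_le_mul_maxScale (sub_pos.2 hδs).le hL hsq
    have hdet := abs_detuning_le_of_mem_syncSet hω i
    rw [detuning] at hdet
    linarith [le_of_abs_le hmean, le_of_abs_le hdet]

theorem mem_syncSet_of_abs_lt_mul_maxScale {N : ℕ} {γ s t δ : ℝ} {ω : Fin N → ℝ} (ht : 0 < t)
    (hts : t < s) (hL : 1 ≤ (s - t) ^ 2 * maxScale N) (hδL : δ < (δ - s) * s ^ 2 * maxScale N)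
    (hδ : 0 < δ) (hγ : δ * maxScale N ≤ γ * N) (hω : ∀ i, |ω i| < t * maxScale N)
    (hsq : ∑ i, ω i ^ 2 ≤ N * maxScale N) : ω ∈ syncSet N γ := by
  have hL0 : 0 < maxScale N := pos_of_mul_pos_right (one_pos.trans_le hL) (sq_nonneg _)
  have hγ0 : 0 ≤ γ :=
    (pos_of_mul_pos_left ((mul_pos hδ hL0).trans_le hγ) (Nat.cast_nonneg N)).le
  have hs0 : 0 < s := ht.trans hts
  have hdet (i) : |detuning ω i| < s * maxScale N :=
    calc |detuning ω i| ≤ |ω i| + |(∑ j, ω j) / N| := abs_sub _ _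
      _ < t * maxScale N + (s - t) * maxScale N :=
        add_lt_add_of_lt_of_le (hω i) (abs_mean_le_mul_maxScale (sub_pos.2 hts).le hL hsq)
      _ = s * maxScale N := by ring
  have hsL : maxScale N ≤ (s * maxScale N) ^ 2 :=
    calc maxScale N ≤ (s - t) ^ 2 * maxScale N * maxScale N := le_mul_of_one_le_left hL0.le hL
      _ ≤ s ^ 2 * maxScale N * maxScale N := by gcongr; linarith
      _ = (s * maxScale N) ^ 2 := by ring
  refine mem_syncSet_of_sum_sq_lt hγ0 (mul_pos hs0 hL0) hdet ?_
  calc (s * maxScale N) ^ 3 < δ * maxScale N * ((s * maxScale N) ^ 2 - maxScale N) := by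
        linarith [mul_lt_mul_of_pos_right hδL (pow_pos hL0 2)]
    _ ≤ γ * N * ((s * maxScale N) ^ 2 - maxScale N) :=
        mul_le_mul_of_nonneg_right hγ (sub_nonneg.2 hsL)
    _ = γ * (N * (s * maxScale N) ^ 2 - N * maxScale N) := by ring
    _ ≤ γ * (N * (s * maxScale N) ^ 2 - ∑ i, ω i ^ 2) := by gcongr

theorem tendsto_Psync_one {γ : ℕ → ℝ} {δ : ℝ} (hδ : 1 < δ)
    (hγ : ∀ᶠ N in atTop, δ * maxScale N ≤ γ N * N) :
    Tendsto (fun N => Psync (γ N) N) atTop (𝓝 1) := by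
  obtain ⟨s, hs1, hsδ⟩ := exists_between hδ
  obtain ⟨t, ht1, hts⟩ := exists_between hs1
  have ht0 : 0 < t := one_pos.trans ht1
  have hs0 : 0 < s := ht0.trans hts
  have hlim := ((tendsto_freqLaw_exists_mul_maxScale_le_abs ht1).add
    tendsto_freqLaw_natCast_mul_maxScale_le_sum_sq).const_sub 1
  rw [add_zero, sub_zero] at hlim
  simp only [Psync_eq_measureReal]
  refine tendsto_of_tendsto_of_tendsto_of_le_of_le' hlim tendsto_const_nhds ?_
    (.of_forall fun N => measureReal_le_one)
  filter_upwards [hγ,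
    (tendsto_maxScale.const_mul_atTop (pow_pos (sub_pos.2 hts) 2)).eventually_ge_atTop 1,
    (tendsto_maxScale.const_mul_atTop
      (mul_pos (sub_pos.2 hsδ) (pow_pos hs0 2))).eventually_gt_atTop δ] with N hγN hL hδL
  have hcover : Set.univ ⊆ syncSet N (γ N) ∪ ({ω | ∃ i, t * maxScale N ≤ |ω i|} ∪
      {ω | N * maxScale N ≤ ∑ i, ω i ^ 2}) := by
    intro ω _
    by_contra hω
    simp only [Set.mem_union, Set.mem_ofPred_eq, not_or, not_exists, not_le] at hω
    exact hω.1 (mem_syncSet_of_abs_lt_mul_maxScale ht0 hts hL hδL (by linarith) hγN hω.2.1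
      hω.2.2.le)
  have hone : 1 ≤ (freqLaw N).real _ := probReal_univ.symm.trans_le (measureReal_mono hcover)
  rw [sub_le_iff_le_add]
  exact hone.trans ((measureReal_union_le _ _).trans
    (add_le_add_right (measureReal_union_le _ _) _))

theorem phi_mul_natCast (N : ℕ) : phi N * N = N / (N + 1) * maxScale N := by
  rw [phi, maxScale]
  ring

theorem stmt18_general :
    (∀ δ : ℝ, |δ| < 1 → Tendsto (fun N : ℕ => Psync (δ * phi N) N) atTop (𝓝 0)) ∧
    (∀ δ : ℝ, 1 < δ → Tendsto (fun N : ℕ => Psync (δ * phi N) N) atTop (𝓝 1)) ∧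
    (∀ γ : ℝ, Tendsto (fun N : ℕ => Psync (γ / N) N) atTop (𝓝 0)) := by
  refine ⟨fun δ hδ => tendsto_Psync_zero hδ (.of_forall fun N => ?_), fun δ hδ => ?_,
    fun γ => tendsto_Psync_zero one_half_lt_one ?_⟩
  · rw [abs_mul, abs_of_nonneg (a := phi N) (by rw [phi]; positivity), mul_assoc, phi_mul_natCast]
    gcongr
    exact mul_le_of_le_one_left (sqrt_nonneg _) (div_le_one_of_le₀ (by linarith) (by positivity))
  · obtain ⟨δ', hδ1, hδ'⟩ := exists_between hδ
    have hlim := (tendsto_natCast_div_add_atTop (1 : ℝ)).const_mul δ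
    rw [mul_one] at hlim
    refine tendsto_Psync_one hδ1 ?_
    filter_upwards [hlim.eventually (eventually_ge_nhds hδ')] with N hN
    rw [mul_assoc, phi_mul_natCast, ← mul_assoc]
    exact mul_le_mul_of_nonneg_right hN (sqrt_nonneg _)
  · filter_upwards [eventually_ne_atTop 0,
      (tendsto_maxScale.const_mul_atTop one_half_pos).eventually_ge_atTop |γ|] with N hN hγN
    rwa [abs_div, Nat.abs_cast, div_mul_cancel₀ _ (Nat.cast_ne_zero.2 hN)]

end Threshold

theorem stmt18 :
    (∀ δ : ℝ, 0 < δ → δ < 1 →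
      Filter.Tendsto (fun N : ℕ => Psync (δ * phi N) N) Filter.atTop (nhds 0)) ∧
    (∀ δ : ℝ, 2 ≤ δ →
      Filter.Tendsto (fun N : ℕ => Psync (δ * phi N) N) Filter.atTop (nhds 1)) ∧
    (∀ γ : ℝ, 0 < γ →
      Filter.Tendsto (fun N : ℕ => Psync (γ / N) N) Filter.atTop (nhds 0)) := by
  obtain ⟨hzero, hone, hclassical⟩ := stmt18_general
  exact ⟨fun δ h₀ h₁ => hzero δ (abs_lt.2 ⟨by linarith, h₁⟩), fun δ h => hone δ (by linarith),
    fun γ _ => hclassical γ⟩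
end
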